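/- For every integer j with 0 ≤ j ≤ 52, the space S_{j,2}(Γ₂) of Siegel cusp forms of degree 2 and weight (j,2) on the full Siegel modular group Γ₂ = Sp(4,ℤ) is zero. -/

import Mathlib

noncomputable section

open Matrix Complex Filter Topology

/-- The standard symplectic form matrix of size 4. -/
def J4 : Matrix (Fin 4) (Fin 4) ℤ := !![0,0,1,0; 0,0,0,1; -1,0,0,0; 0,-1,0,0]

/-- The Siegel modular group `Γ₂ = Sp(4,ℤ)`, as a set of 4×4 integer matrices. -/
def Sp4Z : Set (Matrix (Fin 4) (Fin 4) ℤ) := {γ | γᵀ * J4 * γ = J4}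

/-- The principal congruence subgroup `Γ₂[2]` of level 2. -/
def Sp4Z2 : Set (Matrix (Fin 4) (Fin 4) ℤ) :=
  {γ | γ ∈ Sp4Z ∧ ∀ i j, ((γ i j : ZMod 2) = if i = j then 1 else 0)}

/-- The Siegel upper half space of degree 2: symmetric 2×2 complex matrices with
positive definite imaginary part (encoded as functions `Fin 2 → Fin 2 → ℂ`). -/
def H2 : Set (Fin 2 → Fin 2 → ℂ) :=
  {τ | (Matrix.of τ).IsSymm ∧ (Matrix.of fun i j => (τ i j).im).PosDef}

/-- The four 2×2 blocks of a 4×4 integer matrix, as complex matrices. -/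
def blk (γ : Matrix (Fin 4) (Fin 4) ℤ) (r s : Fin 2) : Matrix (Fin 2) (Fin 2) ℂ :=
  Matrix.of fun i j =>
    ((γ ⟨2 * (r : ℕ) + (i : ℕ), by have h1 := r.isLt; have h2 := i.isLt; omega⟩
        ⟨2 * (s : ℕ) + (j : ℕ), by have h1 := s.isLt; have h2 := j.isLt; omega⟩ : ℤ) : ℂ)

/-- The factor `cτ + d`. -/
def den (γ : Matrix (Fin 4) (Fin 4) ℤ) (τ : Fin 2 → Fin 2 → ℂ) : Matrix (Fin 2) (Fin 2) ℂ :=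
  blk γ 1 0 * Matrix.of τ + blk γ 1 1

/-- The action `γ·τ = (aτ+b)(cτ+d)⁻¹` of `Sp(4)` on the Siegel upper half space. -/
def moeb (γ : Matrix (Fin 4) (Fin 4) ℤ) (τ : Fin 2 → Fin 2 → ℂ) : Fin 2 → Fin 2 → ℂ :=
  fun i j => ((blk γ 0 0 * Matrix.of τ + blk γ 0 1) * (den γ τ)⁻¹) i j

/-- Matrix coefficients of the `j`-th symmetric power of the standard representation of
`GL(2,ℂ)`, in the basis `x₁^(j-i) x₂^i`. -/
def symCoeff (j : ℕ) (m : Matrix (Fin 2) (Fin 2) ℂ) (l i : Fin (j + 1)) : ℂ :=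
  (((Polynomial.C (m 0 0) + Polynomial.C (m 1 0) * Polynomial.X) ^ (j - (l : ℕ)) *
    (Polynomial.C (m 0 1) + Polynomial.C (m 1 1) * Polynomial.X) ^ (l : ℕ)).coeff i)

/-- The `j`-th symmetric power `Sym^j(m)` acting on coordinate vectors. -/
def symAct (j : ℕ) (m : Matrix (Fin 2) (Fin 2) ℂ) (v : Fin (j + 1) → ℂ) : Fin (j + 1) → ℂ :=
  fun i => ∑ l, symCoeff j m l i * v l

lemma symAct_add (j : ℕ) (m : Matrix (Fin 2) (Fin 2) ℂ) (v w : Fin (j + 1) → ℂ) :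
    symAct j m (v + w) = symAct j m v + symAct j m w := by
  funext i
  simp [symAct, mul_add, Finset.sum_add_distrib]

lemma symAct_smul (j : ℕ) (m : Matrix (Fin 2) (Fin 2) ℂ) (a : ℂ) (v : Fin (j + 1) → ℂ) :
    symAct j m (a • v) = a • symAct j m v := by
  funext i
  simp only [symAct, Pi.smul_apply, smul_eq_mul, Finset.mul_sum]
  exact Finset.sum_congr rfl fun l _ => by ring

lemma symAct_zero (j : ℕ) (m : Matrix (Fin 2) (Fin 2) ℂ) : symAct j m 0 = 0 := by
  funext i; simp [symAct]

/-- The weight `(j,k)` automorphy action `Sym^j(m) ⊗ det(m)^k`. -/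
def wt (j : ℕ) (k : ℤ) (m : Matrix (Fin 2) (Fin 2) ℂ) (v : Fin (j + 1) → ℂ) :
    Fin (j + 1) → ℂ :=
  (m.det ^ k) • symAct j m v

lemma wt_add (j : ℕ) (k : ℤ) (m : Matrix (Fin 2) (Fin 2) ℂ) (v w : Fin (j + 1) → ℂ) :
    wt j k m (v + w) = wt j k m v + wt j k m w := by
  simp [wt, symAct_add, smul_add]

lemma wt_smul (j : ℕ) (k : ℤ) (m : Matrix (Fin 2) (Fin 2) ℂ) (a : ℂ) (v : Fin (j + 1) → ℂ) :
    wt j k m (a • v) = a • wt j k m v := by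
  rw [wt, wt, symAct_smul, smul_comm]

lemma wt_zero (j : ℕ) (k : ℤ) (m : Matrix (Fin 2) (Fin 2) ℂ) : wt j k m 0 = 0 := by
  simp [wt, symAct_zero]

/-- The slash operation `(F|γ)(τ) = Sym^j(cτ+d)⁻¹ det(cτ+d)⁻ᵏ F(γ·τ)`. -/
def slashS (j : ℕ) (k : ℤ) (γ : Matrix (Fin 4) (Fin 4) ℤ)
    (F : (Fin 2 → Fin 2 → ℂ) → (Fin (j + 1) → ℂ)) (τ : Fin 2 → Fin 2 → ℂ) :
    Fin (j + 1) → ℂ :=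
  ((den γ τ).det ^ (-k)) • symAct j ((den γ τ)⁻¹) (F (moeb γ τ))

lemma slashS_add (j : ℕ) (k : ℤ) (γ : Matrix (Fin 4) (Fin 4) ℤ)
    (F G : (Fin 2 → Fin 2 → ℂ) → (Fin (j + 1) → ℂ)) (τ : Fin 2 → Fin 2 → ℂ) :
    slashS j k γ (F + G) τ = slashS j k γ F τ + slashS j k γ G τ := by
  simp [slashS, symAct_add, smul_add]

lemma slashS_smul (j : ℕ) (k : ℤ) (γ : Matrix (Fin 4) (Fin 4) ℤ) (a : ℂ)
    (F : (Fin 2 → Fin 2 → ℂ) → (Fin (j + 1) → ℂ)) (τ : Fin 2 → Fin 2 → ℂ) :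
    slashS j k γ (a • F) τ = a • slashS j k γ F τ := by
  simp only [slashS, Pi.smul_apply, symAct_smul]
  rw [smul_comm]

lemma slashS_zero (j : ℕ) (k : ℤ) (γ : Matrix (Fin 4) (Fin 4) ℤ) (τ : Fin 2 → Fin 2 → ℂ) :
    slashS j k γ (0 : (Fin 2 → Fin 2 → ℂ) → (Fin (j + 1) → ℂ)) τ = 0 := by
  simp [slashS, symAct_zero]

/-- The diagonal point `diag(τ₁,τ₂)` of the Siegel upper half space. -/
def diagH (τ₁ τ₂ : ℂ) : Fin 2 → Fin 2 → ℂ :=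
  fun i j => if i = j then (if i = 0 then τ₁ else τ₂) else 0

/-- `F` is a Siegel cusp form of degree 2 and weight `(j,k)` on `Γ`, with character `χ`:
holomorphic on `ℍ₂`, transforming by `F(γ·τ) = χ(γ) Sym^j(cτ+d) det(cτ+d)^k F(τ)` for `γ ∈ Γ`,
with `(F|γ)(diag(τ₁,it)) → 0` as `t → ∞` for every `γ ∈ Γ₂`, and (normalization) vanishing
off `ℍ₂`. -/
def IsSiegelCuspForm (j : ℕ) (k : ℤ) (Γ : Set (Matrix (Fin 4) (Fin 4) ℤ))
    (χ : Matrix (Fin 4) (Fin 4) ℤ → ℂ)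
    (F : (Fin 2 → Fin 2 → ℂ) → (Fin (j + 1) → ℂ)) : Prop :=
  DifferentiableOn ℂ F H2 ∧
  (∀ γ ∈ Γ, ∀ τ ∈ H2, F (moeb γ τ) = χ γ • wt j k (den γ τ) (F τ)) ∧
  (∀ γ ∈ Sp4Z, ∀ τ₁ : ℂ, 0 < τ₁.im →
    Tendsto (fun t : ℝ => slashS j k γ F (diagH τ₁ (t * Complex.I))) atTop (𝓝 0)) ∧
  (∀ τ, τ ∉ H2 → F τ = 0)

/-- The space `S_{j,k}(Γ, χ)` of Siegel cusp forms of degree 2 and weight `(j,k)` on `Γ`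
with character `χ`, as a complex vector space. -/
def SiegelCusp (j : ℕ) (k : ℤ) (Γ : Set (Matrix (Fin 4) (Fin 4) ℤ))
    (χ : Matrix (Fin 4) (Fin 4) ℤ → ℂ) :
    Submodule ℂ ((Fin 2 → Fin 2 → ℂ) → (Fin (j + 1) → ℂ)) where
  carrier := {F | IsSiegelCuspForm j k Γ χ F}
  add_mem' := by
    rintro F G hF hG
    refine ⟨hF.1.add hG.1, ?_, ?_, ?_⟩
    · intro γ hγ τ hτ
      show F (moeb γ τ) + G (moeb γ τ) = χ γ • wt j k (den γ τ) (F τ + G τ)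
      rw [wt_add, smul_add, hF.2.1 γ hγ τ hτ, hG.2.1 γ hγ τ hτ]
    · intro γ hγ τ₁ hτ
      have h := (hF.2.2.1 γ hγ τ₁ hτ).add (hG.2.2.1 γ hγ τ₁ hτ)
      rw [add_zero] at h
      exact h.congr fun t => (slashS_add j k γ F G _).symm
    · intro τ hτ
      show F τ + G τ = 0
      rw [hF.2.2.2 τ hτ, hG.2.2.2 τ hτ, add_zero]
  zero_mem' := by
    refine ⟨?_, ?_, ?_, ?_⟩
    · exact differentiableOn_const 0
    · intro γ hγ τ hτ
      show (0 : Fin (j + 1) → ℂ) = χ γ • wt j k (den γ τ) 0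
      rw [wt_zero, smul_zero]
    · intro γ hγ τ₁ hτ
      have : (fun t : ℝ => slashS j k γ (0 : (Fin 2 → Fin 2 → ℂ) → (Fin (j + 1) → ℂ))
          (diagH τ₁ (t * Complex.I))) = fun _ => 0 := by
        funext t; exact slashS_zero j k γ _
      rw [this]
      exact tendsto_const_nhds
    · intro τ _; rfl
  smul_mem' := by
    rintro a F hF
    refine ⟨hF.1.const_smul a, ?_, ?_, ?_⟩
    · intro γ hγ τ hτ
      show a • F (moeb γ τ) = χ γ • wt j k (den γ τ) (a • F τ)
      rw [hF.2.1 γ hγ τ hτ, wt_smul, smul_comm]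
    · intro γ hγ τ₁ hτ
      have h := (hF.2.2.1 γ hγ τ₁ hτ).const_smul a
      rw [smul_zero] at h
      exact h.congr fun t => (slashS_smul j k γ a F _).symm
    · intro τ hτ
      show a • F τ = 0
      rw [hF.2.2.2 τ hτ, smul_zero]

/-- `ε` is (on `Γ₂`) the unique nontrivial homomorphism `Γ₂ → {±1}`. -/
def IsEps (ε : Matrix (Fin 4) (Fin 4) ℤ → ℂ) : Prop :=
  (∀ γ ∈ Sp4Z, ε γ = 1 ∨ ε γ = -1) ∧
  (∀ γ ∈ Sp4Z, ∀ δ ∈ Sp4Z, ε (γ * δ) = ε γ * ε δ) ∧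
  (∃ γ ∈ Sp4Z, ε γ ≠ 1)

/-!
Let `a (n, r, m)` be the Fourier coefficients of `F`; they are binary forms of degree `j` permuted
by `GL₂(ℤ)` and supported on positive definite `[n, r, m]`. The highest component of the `m`-th
Fourier–Jacobi coefficient that does not vanish, say the `l`-th, is a Jacobi cusp form of weight
`2 + (j - l)` and index `m`. The product of its first nonvanishing Taylor coefficients over an orbit
of `1`-, `2`- or `3`-torsion points behaves in absolute value like a modular form for `SL₂(ℤ)`. If
its order at the cusp exceeds a twelfth of its weight, it vanishes, and this forces the Laurent
polynomial at the lowest power of `q` to vanish to high order at roots of unity of order at most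
`3`. For small `m` these are too many zeros, so that many top components of the `m`-th
Fourier–Jacobi coefficient vanish.

By `GL₂(ℤ)`-equivariance, the form `a (n, r, m)` then vanishes at every primitive `(x, y)` to an
order governed by the value `n x² + r x y + m y²`. When `j ≤ 52` these orders add up to more than
`j`, which kills the coefficients successively.
-/

/-! ### Modular forms up to absolute value -/

section NormModular

open UpperHalfPlane ModularGroup ModularForm Asymptotics
open scoped MatrixGroups

lemma isPreconnected_upperHalfPlaneSet : IsPreconnected upperHalfPlaneSet :=
  (convex_halfSpace_im_gt 0).isPreconnected

lemma neg_one_div_mem_upperHalfPlaneSet {τ : ℂ} (hτ : τ ∈ upperHalfPlaneSet) :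
    -1 / τ ∈ upperHalfPlaneSet := by
  have hτ0 : τ ≠ 0 := UpperHalfPlane.ne_zero ⟨τ, hτ⟩
  simpa [neg_div] using div_pos hτ (Complex.normSq_pos.2 hτ0)

lemma coe_S_smul (z : ℍ) : ((S • z : ℍ) : ℂ) = -1 / z := by
  rw [modular_S_smul]
  simp [neg_div, inv_neg]

lemma coe_T_smul (z : ℍ) : ((T • z : ℍ) : ℂ) = z + 1 := by
  rw [modular_T_smul]
  simp [add_comm]

lemma discriminant_T_smul (z : ℍ) : discriminant (T • z) = discriminant z := by
  have h := congrFun discriminant_T_invariant z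
  rw [SL_slash_apply, denom_apply] at h
  simpa [T] using h

lemma discriminant_S_smul (z : ℍ) : discriminant (S • z) = (z : ℂ) ^ 12 * discriminant z := by
  have h := congrFun discriminant_S_invariant z
  rw [SL_slash_apply, denom_apply] at h
  have := z.ne_zero
  rw [← h]
  simp [S]
  field_simp

lemma apply_smul_eq_of_S_of_T {α : Type*} {f : ℍ → α} (hS : ∀ z, f (S • z) = f z)
    (hT : ∀ z, f (T • z) = f z) (g : SL(2, ℤ)) (z : ℍ) : f (g • z) = f z := by
  have hg : g ∈ Subgroup.closure {S, T} := by simp [SpecialLinearGroup.SL2Z_generators]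
  induction hg using Subgroup.closure_induction generalizing z with
  | mem x hx =>
    rcases hx with rfl | rfl
    exacts [hS z, hT z]
  | one => simp
  | mul x y _ _ hx hy => rw [mul_smul, hx, hy]
  | inv x _ hx => rw [← hx (x⁻¹ • z), smul_inv_smul]

lemma eqOn_zero_of_norm_smul_eq_of_tendsto_zero {f : ℂ → ℂ}
    (hf : DifferentiableOn ℂ f upperHalfPlaneSet)
    (hinv : ∀ (g : SL(2, ℤ)) (z : ℍ), ‖f ↑(g • z)‖ = ‖f z‖)
    (hlim : Tendsto (fun z : ℍ => f z) atImInfty (𝓝 0)) : Set.EqOn f 0 upperHalfPlaneSet := by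
  intro τ hτ
  by_contra hne
  obtain ⟨Y, hY⟩ := (atImInfty_mem _).1
    (hlim.norm.eventually_lt_const (by simpa using hne : ‖(0 : ℂ)‖ < ‖f τ‖))
  have hreduce : ∀ z : ℍ, ‖f τ‖ ≤ ‖f z‖ →
      ∃ w ∈ truncatedFundamentalDomain Y, ‖f w‖ = ‖f z‖ := by
    intro z hz
    obtain ⟨g, hg⟩ := exists_smul_mem_fd z
    refine ⟨g • z, ⟨hg, le_of_not_gt fun hlt => ?_⟩, hinv g z⟩
    exact (hz.trans_eq (hinv g z).symm).not_gt (hY _ hlt.le)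
  obtain ⟨w₀, hw₀, hw₀τ⟩ := hreduce ⟨τ, hτ⟩ le_rfl
  have hcont : Continuous fun z : ℍ => ‖f z‖ :=
    (hf.continuousOn.comp_continuous continuous_coe fun z => z.2).norm
  obtain ⟨w, -, hw⟩ :=
    (isCompact_truncatedFundamentalDomain Y).exists_isMaxOn ⟨w₀, hw₀⟩ hcont.continuousOn
  have hmax : IsMaxOn (norm ∘ f) upperHalfPlaneSet w := by
    intro z hz
    rcases le_total ‖f τ‖ ‖f z‖ with hle | hle
    · obtain ⟨z', hz', hzz'⟩ := hreduce ⟨z, hz⟩ hle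
      exact hzz'.symm.trans_le (hw hz')
    · exact hle.trans (hw₀τ.symm.trans_le (hw hw₀))
  have hconst := eqOn_of_isPreconnected_of_isMaxOn_norm isPreconnected_upperHalfPlaneSet
    isOpen_upperHalfPlaneSet hf w.2 hmax
  have hfτ : Tendsto (fun z : ℍ => f z) atImInfty (𝓝 (f τ)) :=
    tendsto_const_nhds.congr fun z => (hconst hτ).trans (hconst z.2).symm
  exact hne (tendsto_nhds_unique hfτ hlim)

lemma isBigO_div_discriminant_pow {f : ℍ → ℂ} {b : ℝ} (w : ℕ)
    (hf : f =O[atImInfty] fun z => Real.exp (b * z.im)) :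
    (fun z => f z / discriminant z ^ w) =O[atImInfty]
      fun z => Real.exp ((b + 2 * Real.pi * w) * z.im) := by
  refine (hf.mul ((exp_isBigO_discriminant.pow w).inv_rev
    (Eventually.of_forall fun z hz => absurd hz (by positivity)))).congr_right fun z => ?_
  rw [← Real.exp_nat_mul, ← Real.exp_neg, ← Real.exp_add]
  congr 1
  ring

theorem eqOn_zero_of_weight_lt_twelve_mul_order {Ψ : ℂ → ℂ} {w : ℕ} {α : ℝ}
    (hΨ : DifferentiableOn ℂ Ψ upperHalfPlaneSet)
    (hT : ∀ τ ∈ upperHalfPlaneSet, ‖Ψ (τ + 1)‖ = ‖Ψ τ‖)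
    (hS : ∀ τ ∈ upperHalfPlaneSet, ‖Ψ (-1 / τ)‖ = ‖τ‖ ^ w * ‖Ψ τ‖)
    (hO : (fun z : ℍ => Ψ z) =O[atImInfty] fun z => Real.exp (-(2 * Real.pi * α * z.im)))
    (hw : w < 12 * α) : Set.EqOn Ψ 0 upperHalfPlaneSet := by
  -- `Ψ¹² / Δʷ` has weight zero and still vanishes at infinity.
  set H : ℂ → ℂ := fun τ => Ψ τ ^ 12 / (ModularForm.eta τ ^ 24) ^ w with hH
  have hHz : ∀ z : ℍ, H z = Ψ z ^ 12 / discriminant z ^ w := fun z => rfl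
  have hHd : DifferentiableOn ℂ H upperHalfPlaneSet := by
    refine (hΨ.pow 12).div (fun z hz => ?_)
      fun z hz => pow_ne_zero _ (pow_ne_zero _ (eta_ne_zero hz))
    exact (((differentiableAt_eta_of_mem_upperHalfPlaneSet hz).pow 24).pow w).differentiableWithinAt
  have hHS : ∀ z : ℍ, ‖H ↑(S • z)‖ = ‖H z‖ := by
    intro z
    have hz : ‖(z : ℂ)‖ ≠ 0 := norm_ne_zero_iff.2 z.ne_zero
    have hΔ : ‖discriminant z‖ ≠ 0 := norm_ne_zero_iff.2 (discriminant_ne_zero z)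
    rw [hHz, hHz, discriminant_S_smul, coe_S_smul]
    simp only [norm_div, norm_pow, norm_mul, hS z z.2]
    field_simp
    ring
  have hHT : ∀ z : ℍ, ‖H ↑(T • z)‖ = ‖H z‖ := by
    intro z
    rw [hHz, hHz, discriminant_T_smul, coe_T_smul]
    simp only [norm_div, norm_pow, hT z z.2]
  have hHO : (fun z : ℍ => H z) =O[atImInfty]
      fun z => Real.exp (-(2 * Real.pi * (12 * α - w)) * z.im) := by
    have hO12 := (hO.pow 12).congr_right fun z => (Real.exp_nat_mul _ 12).symm
    refine (isBigO_div_discriminant_pow (b := -(2 * Real.pi * (12 * α))) w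
      (hO12.congr_right fun z => ?_)).congr_right fun z => ?_ <;>
    · congr 1
      push_cast
      ring
  have hlim : Tendsto (fun z : ℍ => H z) atImInfty (𝓝 0) := by
    have hc : -(2 * Real.pi * (12 * α - w)) < 0 :=
      neg_lt_zero.2 (mul_pos Real.two_pi_pos (sub_pos.2 hw))
    exact hHO.trans_tendsto
      (Real.tendsto_exp_atBot.comp (tendsto_comap.const_mul_atTop_of_neg hc))
  have hH0 := eqOn_zero_of_norm_smul_eq_of_tendsto_zero hHd
    (apply_smul_eq_of_S_of_T (f := fun z : ℍ => ‖H z‖) hHS hHT) hlim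
  intro τ hτ
  have h := hH0 hτ
  simp only [hH, Pi.zero_apply, div_eq_zero_iff, pow_eq_zero_iff', eta_ne_zero hτ] at h
  simpa using h

lemma exists_eqOn_zero_of_prod_eqOn_zero {ι : Type*} (s : Finset ι) (g : ι → ℂ → ℂ) {U : Set ℂ}
    (hU : IsOpen U) (hUc : IsConnected U) (hg : ∀ i ∈ s, DifferentiableOn ℂ (g i) U)
    (h : Set.EqOn (fun τ => ∏ i ∈ s, g i τ) 0 U) : ∃ i ∈ s, Set.EqOn (g i) 0 U := by
  classical
  induction s using Finset.induction_on with
  | empty =>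
    obtain ⟨τ, hτ⟩ := hUc.nonempty
    simpa using h hτ
  | insert i s hi ih =>
    obtain ⟨hgi, hgs⟩ := (Finset.forall_mem_insert _ _ _).1 hg
    have hprod := DifferentiableOn.fun_finsetProd (u := s) hgs
    rcases (hgi.analyticOnNhd hU).eq_zero_or_eq_zero_of_mul_eq_zero (hprod.analyticOnNhd hU)
      (fun τ hτ => by simpa [Finset.prod_insert hi] using h hτ) hUc.isPreconnected with h0 | h0
    · exact ⟨i, Finset.mem_insert_self _ _, h0⟩
    · obtain ⟨k, hk, hk0⟩ := ih hgs h0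
      exact ⟨k, Finset.mem_insert_of_mem hk, hk0⟩

lemma eqOn_zero_of_norm_T {f g : ℂ → ℂ}
    (h : ∀ τ ∈ upperHalfPlaneSet, ‖f (τ + 1)‖ = ‖g τ‖) (hf : Set.EqOn f 0 upperHalfPlaneSet) :
    Set.EqOn g 0 upperHalfPlaneSet := fun τ hτ => by
  have hτ1 : τ + 1 ∈ upperHalfPlaneSet := by simpa using hτ
  simpa [hf hτ1] using (h τ hτ).symm

lemma eqOn_zero_of_norm_S {f g : ℂ → ℂ} {w : ℕ}
    (h : ∀ τ ∈ upperHalfPlaneSet, ‖f (-1 / τ)‖ = ‖τ‖ ^ w * ‖g τ‖)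
    (hf : Set.EqOn f 0 upperHalfPlaneSet) : Set.EqOn g 0 upperHalfPlaneSet := fun τ hτ => by
  have hτ0 : τ ≠ 0 := UpperHalfPlane.ne_zero ⟨τ, hτ⟩
  simpa [hf (neg_one_div_mem_upperHalfPlaneSet hτ), hτ0] using (h τ hτ).symm

theorem eqOn_zero_of_norm_permuted {ι : Type*} [Fintype ι] (g : ι → ℂ → ℂ) (t s : Equiv.Perm ι)
    {w : ℕ} (β : ι → ℝ) (hg : ∀ i, DifferentiableOn ℂ (g i) upperHalfPlaneSet)
    (hT : ∀ i, ∀ τ ∈ upperHalfPlaneSet, ‖g i (τ + 1)‖ = ‖g (t i) τ‖)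
    (hS : ∀ i, ∀ τ ∈ upperHalfPlaneSet, ‖g i (-1 / τ)‖ = ‖τ‖ ^ w * ‖g (s i) τ‖)
    (hO : ∀ i, (fun z : ℍ => g i z) =O[atImInfty] fun z => Real.exp (-(2 * Real.pi * β i * z.im)))
    (hβ : (Fintype.card ι * w : ℝ) < 12 * ∑ i, β i)
    (htrans : ∀ P : ι → Prop, (∀ i, P i → P (t i)) → (∀ i, P i → P (s i)) → ∀ i k, P i → P k)
    (i : ι) : Set.EqOn (g i) 0 upperHalfPlaneSet := by
  have hprod : Set.EqOn (fun τ => ∏ i, g i τ) 0 upperHalfPlaneSet := by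
    refine eqOn_zero_of_weight_lt_twelve_mul_order (w := Fintype.card ι * w) (α := ∑ i, β i)
      (DifferentiableOn.fun_finsetProd fun i _ => hg i) ?_ ?_ ?_ (by exact_mod_cast hβ)
    · intro τ hτ
      simp only [norm_prod, fun i => hT i τ hτ]
      exact Equiv.prod_comp t fun i => ‖g i τ‖
    · intro τ hτ
      simp only [norm_prod, fun i => hS i τ hτ, Finset.prod_mul_distrib, Finset.prod_const,
        Finset.card_univ, ← pow_mul, mul_comm w]
      rw [Equiv.prod_comp s fun i => ‖g i τ‖]
    · refine (IsBigO.finsetProd (s := Finset.univ) fun i _ => hO i).congr_right fun z => ?_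
      rw [← Real.exp_sum, Finset.sum_neg_distrib, Finset.mul_sum, Finset.sum_mul]
  obtain ⟨i₀, -, h₀⟩ := exists_eqOn_zero_of_prod_eqOn_zero Finset.univ g isOpen_upperHalfPlaneSet
    ⟨⟨Complex.I, by simp⟩, isPreconnected_upperHalfPlaneSet⟩ (fun i _ => hg i) hprod
  exact htrans (fun i => Set.EqOn (g i) 0 upperHalfPlaneSet) (fun i => eqOn_zero_of_norm_T (hT i))
    (fun i => eqOn_zero_of_norm_S (hS i)) i₀ i h₀

end NormModular

/-! ### Fourier series on tube domains -/

/-- The additive character `e(x) = exp(2πix)` of `ℂ`, written `𝐞` below. -/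
def expTwoPiI (x : ℂ) : ℂ := Complex.exp (2 * Real.pi * I * x)

local notation "𝐞" => expTwoPiI

lemma expTwoPiI_add (x y : ℂ) : 𝐞 (x + y) = 𝐞 x * 𝐞 y := by
  simp only [expTwoPiI, mul_add, Complex.exp_add]

lemma expTwoPiI_intCast (n : ℤ) : 𝐞 n = 1 := by
  rw [expTwoPiI, mul_comm, Complex.exp_int_mul_two_pi_mul_I]

lemma norm_expTwoPiI (x : ℂ) : ‖𝐞 x‖ = Real.exp (-(2 * Real.pi * x.im)) := by
  simp [expTwoPiI, Complex.norm_exp]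

lemma expTwoPiI_ne_zero (x : ℂ) : 𝐞 x ≠ 0 := Complex.exp_ne_zero _

lemma differentiable_expTwoPiI : Differentiable ℂ 𝐞 := by
  unfold expTwoPiI
  fun_prop

section FourierTube

open MeasureTheory

/- As in `Mathlib.Analysis.Fourier.AddCircleMulti`, the unit circle carries its Haar probability
measure rather than the global Lebesgue instance. -/
local instance : MeasureSpace UnitAddCircle := ⟨AddCircle.haarAddCircle⟩

local instance : Measure.IsAddHaarMeasure (volume : Measure UnitAddCircle) :=
  inferInstanceAs (Measure.IsAddHaarMeasure AddCircle.haarAddCircle)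

local instance : IsProbabilityMeasure (volume : Measure UnitAddCircle) :=
  inferInstanceAs (IsProbabilityMeasure AddCircle.haarAddCircle)

lemma integral_boundary_unitSquare_eq_zero {G : ℂ → ℂ} {g : ℝ → ℝ → ℂ}
    (hG : DifferentiableOn ℂ G (Complex.im ⁻¹' Set.Icc 0 1))
    (hg : ∀ x : ℝ, ∀ t ∈ Set.Icc (0 : ℝ) 1, G (x + t * I) = g x t) :
    (∫ x in (0 : ℝ)..1, g x 0) - (∫ x in (0 : ℝ)..1, g x 1) + I • (∫ t in (0 : ℝ)..1, g 1 t) -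
      I • (∫ t in (0 : ℝ)..1, g 0 t) = 0 := by
  have hrect := integral_boundary_rect_eq_zero_of_differentiableOn G 0 (1 + I)
    (hG.mono fun ζ hζ => by simpa using hζ.2)
  have hside (x : ℝ) : ∫ t in (0 : ℝ)..1, G (x + t * I) = ∫ t in (0 : ℝ)..1, g x t :=
    intervalIntegral.integral_congr fun t ht => hg x t (by simpa using ht)
  simpa [← hside, ← hg] using hrect

variable {d : Type*}

/-- A vector of `ℝᵈ`, viewed in `ℂᵈ`. -/
def ofRealVec (x : d → ℝ) : d → ℂ := fun i => x i

/-- The coordinatewise imaginary part; the tube over `Y ⊆ ℝᵈ` is `{w | imVec w ∈ Y}`. -/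
def imVec (w : d → ℂ) : d → ℝ := fun i => (w i).im

/-- The projection `ℝᵈ → (ℝ/ℤ)ᵈ`. -/
def torusMk (x : d → ℝ) : UnitAddTorus d := fun i => (x i : UnitAddCircle)

/-- The representative in `[0,1)ᵈ` of a point of the torus; a periodic function `h` on a tube is
integrated over the torus through `q ↦ h (torusRep q + w)`. -/
def torusRep (q : UnitAddTorus d) : d → ℝ := fun i => AddCircle.equivIco 1 0 (q i)

lemma imVec_ofRealVec_add (x : d → ℝ) (w : d → ℂ) : imVec (ofRealVec x + w) = imVec w := by
  funext i
  simp [imVec, ofRealVec]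

@[fun_prop]
lemma continuous_ofRealVec : Continuous (ofRealVec : (d → ℝ) → d → ℂ) := by
  unfold ofRealVec
  fun_prop

lemma torusMk_torusRep (q : UnitAddTorus d) : torusMk (torusRep q) = q :=
  funext fun i => (AddCircle.equivIco (1 : ℝ) 0).symm_apply_apply (q i)

lemma torusMk_add (x y : d → ℝ) : torusMk (x + y) = torusMk x + torusMk y := rfl

lemma exists_eq_add_intCast_of_torusMk_eq {x y : d → ℝ} (h : torusMk x = torusMk y) :
    ∃ k : d → ℤ, ∀ i, x i = y i + k i := by
  have hi (i : d) : ∃ k : ℤ, x i = y i + k := by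
    have h0 : ((x i - y i : ℝ) : UnitAddCircle) = 0 := sub_eq_zero.2 (congrFun h i)
    obtain ⟨k, hk⟩ := (AddCircle.coe_eq_zero_iff _).1 h0
    exact ⟨k, sub_eq_iff_eq_add'.1 (by simpa using hk.symm)⟩
  choose k hk using hi
  exact ⟨k, hk⟩

lemma isOpenQuotientMap_torusMk [Finite d] :
    IsOpenQuotientMap (torusMk : (d → ℝ) → UnitAddTorus d) :=
  IsOpenQuotientMap.piMap fun _ => QuotientAddGroup.isOpenQuotientMap_mk

variable {Y : Set (d → ℝ)} {h : (d → ℂ) → ℂ} {w : d → ℂ}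

lemma mFourier_torusMk [Fintype d] (n : d → ℤ) (x : d → ℝ) :
    UnitAddTorus.mFourier n (torusMk x) = 𝐞 (∑ i, n i * ofRealVec x i) := by
  simp only [UnitAddTorus.mFourier, torusMk, ContinuousMap.coe_mk, fourier_coe_apply, expTwoPiI,
    Finset.mul_sum, Complex.exp_sum, ofRealVec]
  refine Finset.prod_congr rfl fun i _ => ?_
  congr 1
  push_cast
  ring

/-- The mean of a periodic function over the translate `w + ℝᵈ / ℤᵈ`. -/
def torusMean [Fintype d] (h : (d → ℂ) → ℂ) (w : d → ℂ) : ℂ :=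
  ∫ q : UnitAddTorus d, h (ofRealVec (torusRep q) + w)

/-- `h` is holomorphic on the tube over `Y` and invariant under translation by `ℤᵈ`. -/
structure IsPeriodicHolomorphic (Y : Set (d → ℝ)) (h : (d → ℂ) → ℂ) : Prop where
  differentiableOn : DifferentiableOn ℂ h {w | imVec w ∈ Y}
  add_intCast : ∀ w, imVec w ∈ Y → ∀ k : d → ℤ, h (w + fun i => (k i : ℂ)) = h w

namespace IsPeriodicHolomorphic

lemma apply_torusRep_torusMk (hh : IsPeriodicHolomorphic Y h) (hw : imVec w ∈ Y) (x : d → ℝ) :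
    h (ofRealVec (torusRep (torusMk x)) + w) = h (ofRealVec x + w) := by
  obtain ⟨k, hk⟩ := exists_eq_add_intCast_of_torusMk_eq (torusMk_torusRep (torusMk x))
  rw [← hh.add_intCast (ofRealVec x + w) (by rwa [imVec_ofRealVec_add]) k]
  congr 1
  funext i
  simp only [ofRealVec, Pi.add_apply, hk]
  push_cast
  ring

lemma continuous_uncurry_apply_torusRep [Finite d] {X : Type*} [TopologicalSpace X]
    (hh : IsPeriodicHolomorphic Y h) {φ : X → d → ℂ} (hφ : Continuous φ)
    (hφY : ∀ x, imVec (φ x) ∈ Y) :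
    Continuous fun p : X × UnitAddTorus d => h (ofRealVec (torusRep p.2) + φ p.1) := by
  rw [← ((IsOpenQuotientMap.id (X := X)).prodMap isOpenQuotientMap_torusMk).continuous_comp_iff]
  have heq : (fun p : X × UnitAddTorus d => h (ofRealVec (torusRep p.2) + φ p.1)) ∘
      Prod.map id torusMk = fun p => h (ofRealVec p.2 + φ p.1) :=
    funext fun p => hh.apply_torusRep_torusMk (hφY p.1) p.2
  rw [heq]
  exact hh.differentiableOn.continuousOn.comp_continuous (by fun_prop)
    fun p => by simpa [imVec_ofRealVec_add] using hφY p.1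

lemma continuous_apply_torusRep [Finite d] (hh : IsPeriodicHolomorphic Y h) (hw : imVec w ∈ Y) :
    Continuous fun q : UnitAddTorus d => h (ofRealVec (torusRep q) + w) :=
  (hh.continuous_uncurry_apply_torusRep (X := Unit) continuous_const fun _ => hw).comp
    (by fun_prop : Continuous fun q => ((), q))

lemma integral_boundary_complexLine_eq_zero [Finite d] (hh : IsPeriodicHolomorphic Y h) {v : d → ℝ}
    {φ : ℝ → ℝ → d → ℂ} (hφY : ∀ x t, imVec (φ x t) ∈ Y)
    (hφ : ∀ x : ℝ, ∀ t ∈ Set.Icc (0 : ℝ) 1, φ x t = w + (x + t * I : ℂ) • ofRealVec v) :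
    (∫ x in (0 : ℝ)..1, h (φ x 0)) - (∫ x in (0 : ℝ)..1, h (φ x 1)) +
      I • (∫ t in (0 : ℝ)..1, h (φ 1 t)) - I • (∫ t in (0 : ℝ)..1, h (φ 0 t)) = 0 := by
  cases nonempty_fintype d
  have hdiff : DifferentiableOn ℂ (fun ζ : ℂ => h (w + ζ • ofRealVec v))
      (Complex.im ⁻¹' Set.Icc 0 1) := by
    refine hh.differentiableOn.comp (by fun_prop) fun ζ hζ => ?_
    have hζY := hφY ζ.re ζ.im
    rwa [hφ _ _ hζ, Complex.re_add_im] at hζY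
  exact integral_boundary_unitSquare_eq_zero (g := fun x t => h (φ x t)) hdiff
    fun x t ht => congrArg h (hφ x t ht).symm

variable [Fintype d]

lemma torusMean_ofRealVec_add (hh : IsPeriodicHolomorphic Y h) (hw : imVec w ∈ Y) (s : d → ℝ) :
    torusMean h (ofRealVec s + w) = torusMean h w := by
  rw [torusMean, torusMean, ← integral_add_right_eq_self
    (fun q : UnitAddTorus d => h (ofRealVec (torusRep q) + w)) (torusMk s)]
  congr 1
  funext q
  nth_rw 2 [← torusMk_torusRep q]
  rw [← torusMk_add, hh.apply_torusRep_torusMk hw]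
  congr 1
  funext i
  simp [ofRealVec, add_assoc]

lemma integral_torusMean (hh : IsPeriodicHolomorphic Y h) {φ : ℝ → d → ℂ} (hφ : Continuous φ)
    (hφY : ∀ s, imVec (φ s) ∈ Y) (a b : ℝ) :
    ∫ s in a..b, torusMean h (φ s) =
      ∫ q : UnitAddTorus d, ∫ s in a..b, h (ofRealVec (torusRep q) + φ s) := by
  refine intervalIntegral_integral_swap ?_
  rw [Measure.restrict_prod_eq_prod_univ]
  exact ((hh.continuous_uncurry_apply_torusRep hφ hφY).continuousOn.integrableOn_compact
    (isCompact_uIcc.prod isCompact_univ)).mono_set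
      (Set.prod_mono Set.uIoc_subset_uIcc subset_rfl)

lemma integrable_intervalIntegral_torusRep (hh : IsPeriodicHolomorphic Y h) {φ : ℝ → d → ℂ}
    (hφ : Continuous φ) (hφY : ∀ s, imVec (φ s) ∈ Y) (a b : ℝ) :
    Integrable fun q : UnitAddTorus d => ∫ s in a..b, h (ofRealVec (torusRep q) + φ s) := by
  refine (intervalIntegral.continuous_parametric_intervalIntegral_of_continuous'
    (f := fun (q : UnitAddTorus d) s => h (ofRealVec (torusRep q) + φ s)) ?_ a b
      ).integrable_of_hasCompactSupport (HasCompactSupport.of_compactSpace _)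
  exact (hh.continuous_uncurry_apply_torusRep hφ hφY).comp continuous_swap

/-- Cauchy's theorem on the unit square spanned by the real and the imaginary direction of `v`. -/
lemma torusMean_add_I_smul (hh : IsPeriodicHolomorphic Y h) {v : d → ℝ}
    (hY : ∀ t ∈ Set.Icc (0 : ℝ) 1, imVec (w + (t * I) • ofRealVec v) ∈ Y) :
    torusMean h (w + I • ofRealVec v) = torusMean h w := by
  let c : ℝ → ℝ := fun t => Set.projIcc 0 1 zero_le_one t
  have hc : ∀ t ∈ Set.Icc (0 : ℝ) 1, c t = t := fun t ht => by simp [c, Set.projIcc_of_mem _ ht]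
  let ψ : ℝ → d → ℂ := fun t => w + (c t * I) • ofRealVec v
  let φ : ℝ → ℝ → d → ℂ := fun x t => ofRealVec (x • v) + ψ t
  have hψY (t : ℝ) : imVec (ψ t) ∈ Y := hY _ (Set.projIcc 0 1 zero_le_one t).2
  have hφY (x t : ℝ) : imVec (φ x t) ∈ Y := by simpa only [φ, imVec_ofRealVec_add] using hψY t
  have hψc : Continuous ψ := by
    have : Continuous c := continuous_subtype_val.comp continuous_projIcc
    fun_prop
  have hφc₁ (t : ℝ) : Continuous fun x => φ x t := by fun_prop
  have hφc₂ (x : ℝ) : Continuous (φ x) := by fun_prop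
  let A (x : ℝ) (q : UnitAddTorus d) : ℂ := ∫ t in (0 : ℝ)..1, h (ofRealVec (torusRep q) + φ x t)
  let B (t : ℝ) (q : UnitAddTorus d) : ℂ := ∫ x in (0 : ℝ)..1, h (ofRealVec (torusRep q) + φ x t)
  have hcauchy : B 0 - B 1 + I • A 1 - I • A 0 = 0 := by
    funext q
    refine hh.integral_boundary_complexLine_eq_zero (w := ofRealVec (torusRep q) + w) (v := v)
      (φ := fun x t => ofRealVec (torusRep q) + φ x t)
      (fun x t => by simpa only [imVec_ofRealVec_add] using hφY x t) fun x t ht => ?_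
    funext i
    simp only [φ, ψ, hc t ht, ofRealVec, Pi.add_apply, Pi.smul_apply, smul_eq_mul]
    push_cast
    ring
  have hA (x : ℝ) : ∫ q, A x q = ∫ t in (0 : ℝ)..1, torusMean h (ψ t) := by
    rw [← hh.integral_torusMean (hφc₂ x) (hφY x)]
    simp only [φ, hh.torusMean_ofRealVec_add (hψY _)]
  have hB (t : ℝ) : ∫ q, B t q = torusMean h (ψ t) := by
    rw [← hh.integral_torusMean (hφc₁ t) (hφY · t)]
    simp [φ, hh.torusMean_ofRealVec_add (hψY _)]
  have hAi (x : ℝ) : Integrable (A x) :=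
    hh.integrable_intervalIntegral_torusRep (hφc₂ x) (hφY x) 0 1
  have hBi (t : ℝ) : Integrable (B t) :=
    hh.integrable_intervalIntegral_torusRep (hφc₁ t) (hφY · t) 0 1
  have hint := congrArg (fun f => ∫ q, f q) hcauchy
  rw [integral_sub' (((hBi 0).sub (hBi 1)).add ((hAi 1).smul I)) ((hAi 0).smul I),
    integral_add' ((hBi 0).sub (hBi 1)) ((hAi 1).smul I), integral_sub' (hBi 0) (hBi 1)] at hint
  simp only [Pi.smul_apply, integral_smul, hA, hB, add_sub_cancel_right, Pi.zero_apply,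
    integral_zero, sub_eq_zero] at hint
  simpa [ψ, hc] using hint.symm

lemma torusMean_eq (hh : IsPeriodicHolomorphic Y h) (hY : Convex ℝ Y) {w₀ w₁ : d → ℂ}
    (h₀ : imVec w₀ ∈ Y) (h₁ : imVec w₁ ∈ Y) : torusMean h w₁ = torusMean h w₀ := by
  set v : d → ℝ := imVec w₁ - imVec w₀ with hv
  have hseg : ∀ t ∈ Set.Icc (0 : ℝ) 1, imVec (w₀ + (t * I) • ofRealVec v) ∈ Y := by
    intro t ht
    convert hY.add_smul_sub_mem h₀ h₁ ht using 1
    funext i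
    simp [imVec, ofRealVec, hv]
  have hdecomp : w₁ = ofRealVec (fun i => (w₁ i - w₀ i).re) + (w₀ + I • ofRealVec v) := by
    funext i
    apply Complex.ext <;> simp [ofRealVec, hv, imVec]
  rw [hdecomp, hh.torusMean_ofRealVec_add (by simpa using hseg 1 (by simp)),
    hh.torusMean_add_I_smul hseg]

end IsPeriodicHolomorphic

variable [Fintype d]

/-- The function `h` twisted by the inverse of the `n`-th character; its mean is the `n`-th Fourier
coefficient of `h`. -/
def characterTwist (h : (d → ℂ) → ℂ) (n : d → ℤ) (w : d → ℂ) : ℂ := h w * 𝐞 (-∑ i, n i * w i)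

lemma mFourierCoeff_torusRep_add (h : (d → ℂ) → ℂ) (n : d → ℤ) (w : d → ℂ) :
    UnitAddTorus.mFourierCoeff (fun q => h (ofRealVec (torusRep q) + w)) n =
      torusMean (characterTwist h n) w * 𝐞 (∑ i, n i * w i) := by
  rw [torusMean, UnitAddTorus.mFourierCoeff, ← integral_mul_const]
  congr 1
  funext q
  conv_lhs => rw [← torusMk_torusRep q, mFourier_torusMk, torusMk_torusRep]
  rw [characterTwist, smul_eq_mul, mul_assoc, ← expTwoPiI_add, mul_comm]
  simp [mul_add, Finset.sum_add_distrib]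

lemma summable_pi_prod {κ : Type*} {f : κ → ℝ} (hf : 0 ≤ f) (hs : Summable f) :
    Summable fun n : d → κ => ∏ i, f (n i) := by
  classical
  refine summable_of_sum_le (c := ∏ _i : d, ∑' k, f k)
    (fun n => Finset.prod_nonneg fun i _ => hf (n i)) fun u => ?_
  let t : Finset κ := Finset.univ.biUnion fun i => u.image (· i)
  calc ∑ n ∈ u, ∏ i, f (n i)
      ≤ ∑ n ∈ Fintype.piFinset fun _ : d => t, ∏ i, f (n i) := by
        refine Finset.sum_le_sum_of_subset_of_nonneg (fun n hn => ?_)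
          fun n _ _ => Finset.prod_nonneg fun i _ => hf (n i)
        exact Fintype.mem_piFinset.2 fun i =>
          Finset.mem_biUnion.2 ⟨i, Finset.mem_univ i, Finset.mem_image_of_mem _ hn⟩
    _ = ∏ _i : d, ∑ k ∈ t, f k := (Finset.prod_univ_sum _ _).symm
    _ ≤ ∏ _i : d, ∑' k, f k := Finset.prod_le_prod
        (fun _ _ => Finset.sum_nonneg fun k _ => hf k) fun _ _ => hs.sum_le_tsum t fun k _ => hf k

lemma summable_exp_neg_mul_abs {c : ℝ} (hc : 0 < c) :
    Summable fun n : ℤ => Real.exp (-(c * |(n : ℝ)|)) := by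
  have h : Summable fun n : ℕ => Real.exp (-(c * n)) := by
    simpa [mul_comm] using Real.summable_exp_nat_mul_iff.2 (neg_lt_zero.2 hc)
  exact .of_nat_of_neg (by simpa using h) (by simpa using h)

namespace IsPeriodicHolomorphic

lemma mul_character (hh : IsPeriodicHolomorphic Y h) (n : d → ℤ) :
    IsPeriodicHolomorphic Y (characterTwist h n) where
  differentiableOn :=
    hh.differentiableOn.mul (differentiable_expTwoPiI.comp (by fun_prop)).differentiableOn
  add_intCast w hw k := by
    have harg : -∑ i, (n i : ℂ) * ((w + fun i => (k i : ℂ)) i) =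
        -∑ i, (n i : ℂ) * w i + ((-∑ i, n i * k i : ℤ) : ℂ) := by
      push_cast
      simp only [Pi.add_apply, mul_add, Finset.sum_add_distrib]
      ring
    rw [characterTwist, characterTwist, hh.add_intCast w hw, harg, expTwoPiI_add,
      expTwoPiI_intCast, mul_one]

lemma exists_norm_torusMean_characterTwist_le (hh : IsPeriodicHolomorphic Y h)
    (hw : imVec w ∈ Y) : ∃ C : ℝ, ∀ n : d → ℤ, ‖torusMean (characterTwist h n) w‖ ≤
      C * Real.exp (2 * Real.pi * ∑ i, n i * imVec w i) := by
  let g : C(UnitAddTorus d, ℂ) := ⟨_, hh.continuous_apply_torusRep hw⟩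
  refine ⟨‖g‖, fun n => ?_⟩
  have hcoeff : ‖UnitAddTorus.mFourierCoeff g n‖ ≤ ‖g‖ := by
    refine (norm_integral_le_of_norm_le_const (C := ‖g‖) (.of_forall fun q => ?_)).trans (by simp)
    rw [norm_smul]
    exact (mul_le_mul (ContinuousMap.norm_coe_le_norm _ q) (g.norm_coe_le_norm q)
      (norm_nonneg _) (norm_nonneg _)).trans_eq (by rw [UnitAddTorus.mFourier_norm, one_mul])
  have him : (∑ i, (n i : ℂ) * w i).im = ∑ i, n i * imVec w i := by
    simp [Complex.im_sum, imVec]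
  rwa [show UnitAddTorus.mFourierCoeff g n = _ from mFourierCoeff_torusRep_add h n w, norm_mul,
    norm_expTwoPiI, him, Real.exp_neg, ← div_eq_mul_inv, div_le_iff₀ (Real.exp_pos _)] at hcoeff

/-- The coefficients are estimated at the points `y ± δ`, the signs being opposite to those of
`n`, which gains a factor `exp (-2πδ|n|)`. -/
lemma summable_fourier (hh : IsPeriodicHolomorphic Y h) (hYo : IsOpen Y) (hYc : Convex ℝ Y)
    {w₀ : d → ℂ} (hw₀ : imVec w₀ ∈ Y) (hw : imVec w ∈ Y) :
    Summable fun n : d → ℤ => torusMean (characterTwist h n) w₀ * 𝐞 (∑ i, n i * w i) := by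
  classical
  obtain ⟨ε, hε, hball⟩ := Metric.isOpen_iff.1 hYo _ hw
  obtain ⟨δ, hδ, hδε⟩ := exists_between hε
  let y' (s : d → Bool) : d → ℝ := fun i => (w i).im + if s i then δ else -δ
  have hy' (s : d → Bool) : imVec (fun i => (y' s i : ℂ) * I) ∈ Y := by
    refine hball ((dist_pi_lt_iff hε).2 fun i => ?_)
    rw [Real.dist_eq]
    by_cases hs : s i <;> simp [imVec, y', hs, abs_of_pos hδ, hδε]
  choose C hC using fun s => hh.exists_norm_torusMean_characterTwist_le (hy' s)
  have hM (s : d → Bool) : C s ≤ ∑ s, |C s| := (le_abs_self _).trans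
    (Finset.single_le_sum (f := fun s => |C s|) (fun _ _ => abs_nonneg _) (Finset.mem_univ s))
  have hsum := summable_pi_prod (d := d) (fun n => (Real.exp_pos _).le)
    (summable_exp_neg_mul_abs (mul_pos Real.two_pi_pos hδ))
  refine Summable.of_norm_bounded (hsum.mul_left (∑ s, |C s|)) fun n => ?_
  let s : d → Bool := fun i => decide (n i < 0)
  have hexp : ∑ i, n i * y' s i = ∑ i, n i * (w i).im - ∑ i, δ * |(n i : ℝ)| := by
    rw [← Finset.sum_sub_distrib]
    refine Finset.sum_congr rfl fun i _ => ?_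
    rcases lt_or_ge (n i) 0 with hi | hi
    · simp [y', s, hi, abs_of_neg (Int.cast_lt_zero.2 hi : (n i : ℝ) < 0)]
      ring
    · simp [y', s, hi.not_gt, abs_of_nonneg (Int.cast_nonneg hi : (0 : ℝ) ≤ n i)]
      ring
  rw [← hh.mul_character n |>.torusMean_eq hYc hw₀ (hy' s), norm_mul, norm_expTwoPiI]
  calc _ ≤ (∑ s, |C s|) * Real.exp (2 * Real.pi * ∑ i, n i * y' s i) *
        Real.exp (-(2 * Real.pi * (∑ i, (n i : ℂ) * w i).im)) := by
        gcongr
        exact (hC s n).trans (by simpa [imVec] using by gcongr; exact hM s)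
    _ = (∑ s, |C s|) * Real.exp (∑ i, -(2 * Real.pi * δ * |(n i : ℝ)|)) := by
        rw [mul_assoc, ← Real.exp_add, hexp, Complex.im_sum]
        simp only [Complex.mul_im, Complex.intCast_re, Complex.intCast_im, zero_mul, add_zero,
          Finset.sum_neg_distrib, mul_assoc, ← Finset.mul_sum]
        ring_nf
    _ = _ := by rw [Real.exp_sum]

theorem exists_hasSum_fourier (hh : IsPeriodicHolomorphic Y h) (hYo : IsOpen Y)
    (hYc : Convex ℝ Y) : ∃ a : (d → ℤ) → ℂ, ∀ w, imVec w ∈ Y →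
      HasSum (fun n => a n * 𝐞 (∑ i, n i * w i)) (h w) := by
  by_cases hne : ∃ w₀ : d → ℂ, imVec w₀ ∈ Y
  swap
  · exact ⟨0, fun w hw => absurd ⟨w, hw⟩ hne⟩
  obtain ⟨w₀, hw₀⟩ := hne
  refine ⟨fun n => torusMean (characterTwist h n) w₀, fun w hw => ?_⟩
  let g : C(UnitAddTorus d, ℂ) := ⟨_, hh.continuous_apply_torusRep hw⟩
  have hcoeff (n : d → ℤ) : UnitAddTorus.mFourierCoeff g n =
      torusMean (characterTwist h n) w₀ * 𝐞 (∑ i, n i * w i) := by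
    rw [← hh.mul_character n |>.torusMean_eq hYc hw₀ hw]
    exact mFourierCoeff_torusRep_add h n w
  have hsum := UnitAddTorus.hasSum_mFourier_series_apply_of_summable
    ((hh.summable_fourier hYo hYc hw₀ hw).congr fun n => (hcoeff n).symm) (torusMk 0)
  have hg : g (torusMk 0) = h w := by
    refine (hh.apply_torusRep_torusMk hw 0).trans (congrArg h ?_)
    funext i
    simp [ofRealVec]
  simpa [hcoeff, hg, mFourier_torusMk, ofRealVec, expTwoPiI] using hsum

end IsPeriodicHolomorphic

theorem eq_zero_of_hasSum_fourier_zero {b : (d → ℤ) → ℂ} {y : d → ℝ}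
    (hb : ∀ x : d → ℝ, HasSum (fun n => b n * 𝐞 (∑ i, n i * (x i + y i * I))) 0) : b = 0 := by
  classical
  let b' (n : d → ℤ) : ℂ := b n * 𝐞 (∑ i, n i * (y i * I))
  have hb' (q : UnitAddTorus d) : HasSum (fun n => b' n * UnitAddTorus.mFourier n q) 0 := by
    convert hb (torusRep q) using 2 with n
    conv_lhs => rw [← torusMk_torusRep q, mFourier_torusMk]
    rw [mul_assoc, ← expTwoPiI_add, ← Finset.sum_add_distrib]
    simp only [ofRealVec, ← mul_add, add_comm]
  have hs : Summable fun n => b' n • UnitAddTorus.mFourier n := by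
    refine .of_norm ?_
    simp only [norm_smul, UnitAddTorus.mFourier_norm, mul_one]
    simpa [UnitAddTorus.mFourier] using (hb' 0).summable.norm
  have hzero : HasSum (fun n => b' n • UnitAddTorus.mFourier n) 0 := by
    convert hs.hasSum
    ext q
    exact (hb' q).unique (hs.hasSum.mapL (ContinuousMap.evalCLM ℂ q))
  have hLp := hzero.mapL (ContinuousMap.toLp (E := ℂ) 2 (volume : Measure (UnitAddTorus d)) ℂ)
  funext m
  have hm := hLp.mapL (innerSL ℂ (UnitAddTorus.mFourierLp 2 m))
  have hterm (n : d → ℤ) : innerSL ℂ (UnitAddTorus.mFourierLp 2 m)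
      (ContinuousMap.toLp (E := ℂ) 2 (volume : Measure (UnitAddTorus d)) ℂ
        (b' n • UnitAddTorus.mFourier n)) = if n = m then b' m else 0 := by
    have horth := orthonormal_iff_ite.1 (UnitAddTorus.orthonormal_mFourier (d := d)) m n
    rw [map_smul, map_smul, innerSL_apply_apply,
      show ContinuousMap.toLp 2 volume ℂ (UnitAddTorus.mFourier n) = UnitAddTorus.mFourierLp 2 n
        from rfl, horth]
    rcases eq_or_ne m n with rfl | hmn
    · simp
    · simp [hmn, hmn.symm]
  simp only [hterm, map_zero] at hm
  exact (mul_eq_zero.1 ((hasSum_ite_eq m (b' m)).unique hm)).resolve_right (expTwoPiI_ne_zero _)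

end FourierTube

/-! ### Siegel modular transformations -/

section SiegelTransformations

/-- The point of `ℍ₂` with rows `(τ₁, z)` and `(z, τ₂)`. -/
def siegelPoint (τ₁ z τ₂ : ℂ) : Fin 2 → Fin 2 → ℂ := ![![τ₁, z], ![z, τ₂]]

lemma posDef_fin_two_iff {a b c : ℝ} : !![a, b; b, c].PosDef ↔ 0 < a ∧ b ^ 2 < a * c := by
  constructor
  · intro h
    have hdet := h.det_pos
    rw [det_fin_two_of] at hdet
    exact ⟨h.diag_pos (i := 0), by linarith⟩
  · rintro ⟨ha, hb⟩
    refine .of_dotProduct_mulVec_pos (by ext i k; fin_cases i <;> fin_cases k <;> rfl) ?_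
    intro x hx
    have hform : star x ⬝ᵥ !![a, b; b, c] *ᵥ x = a * x 0 ^ 2 + 2 * b * x 0 * x 1 + c * x 1 ^ 2 := by
      simp [Matrix.mulVec, dotProduct, Fin.sum_univ_two]
      ring
    have hsq : a * (a * x 0 ^ 2 + 2 * b * x 0 * x 1 + c * x 1 ^ 2) =
        (a * x 0 + b * x 1) ^ 2 + (a * c - b ^ 2) * x 1 ^ 2 := by ring
    rw [hform]
    refine (pos_iff_pos_of_mul_pos ?_).1 ha
    rw [hsq]
    by_cases h1 : x 1 = 0
    · have h0 : x 0 ≠ 0 := fun h0 => hx (by funext i; fin_cases i <;> simp [h0, h1])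
      simpa [h1] using pow_pos (mul_pos ha (abs_pos.2 h0)) 2 |>.trans_eq (by
        rw [mul_pow, sq_abs, mul_pow])
    · have := mul_pos (sub_pos.2 hb) (pow_pos (abs_pos.2 h1) 2)
      rw [sq_abs] at this
      positivity

lemma siegelPoint_mem_H2_iff {τ₁ z τ₂ : ℂ} :
    siegelPoint τ₁ z τ₂ ∈ H2 ↔ 0 < τ₁.im ∧ z.im ^ 2 < τ₁.im * τ₂.im := by
  have him : (Matrix.of fun i k => (siegelPoint τ₁ z τ₂ i k).im) =
      !![τ₁.im, z.im; z.im, τ₂.im] := by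
    ext i k
    fin_cases i <;> fin_cases k <;> rfl
  have hsymm : (Matrix.of (siegelPoint τ₁ z τ₂)).IsSymm := by
    ext i k
    fin_cases i <;> fin_cases k <;> rfl
  rw [H2, Set.mem_ofPred_eq, him, posDef_fin_two_iff, and_iff_right hsymm]

lemma eq_siegelPoint_of_mem_H2 {τ : Fin 2 → Fin 2 → ℂ} (hτ : τ ∈ H2) :
    τ = siegelPoint (τ 0 0) (τ 0 1) (τ 1 1) := by
  have hsymm : τ 1 0 = τ 0 1 := hτ.1.apply 0 1
  funext i k
  fin_cases i <;> fin_cases k <;> simp [siegelPoint, hsymm]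

lemma conj_mem_H2 {τ : Fin 2 → Fin 2 → ℂ} (hτ : τ ∈ H2) {U V : Matrix (Fin 2) (Fin 2) ℤ}
    (hVU : V * U = 1) :
    Matrix.of.symm (U.map ((↑) : ℤ → ℂ) * Matrix.of τ * Uᵀ.map ((↑) : ℤ → ℂ)) ∈ H2 := by
  have him : (Matrix.of fun i k => (Matrix.of.symm
      (U.map ((↑) : ℤ → ℂ) * Matrix.of τ * Uᵀ.map ((↑) : ℤ → ℂ)) i k).im) =
      U.map ((↑) : ℤ → ℝ) * (Matrix.of fun i k => (τ i k).im) * (U.map ((↑) : ℤ → ℝ))ᴴ := by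
    ext i k
    simp [Matrix.mul_apply, Fin.sum_univ_two]
  refine ⟨?_, ?_⟩
  · have hsymm : (Matrix.of τ)ᵀ = Matrix.of τ := hτ.1
    simp [Matrix.IsSymm, Matrix.transpose_mul, hsymm, Matrix.transpose_map, Matrix.mul_assoc]
  · rw [him]
    have hUV : U.map ((↑) : ℤ → ℝ) * V.map ((↑) : ℤ → ℝ) = 1 := by
      have := congrArg (Int.castRingHom ℝ).mapMatrix (mul_eq_one_comm.1 hVU)
      rwa [map_mul, map_one] at this
    refine hτ.2.mul_mul_conjTranspose_same (Function.LeftInverse.injective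
      (g := fun x => x ᵥ* V.map ((↑) : ℤ → ℝ)) fun x => ?_)
    simp only [Matrix.vecMul_vecMul, hUV, Matrix.vecMul_one]

/-- The matrix of `Γ₂` with the given four blocks, in the ordering used by `blk`. -/
def ofBlocks (A B C D : Matrix (Fin 2) (Fin 2) ℤ) : Matrix (Fin 4) (Fin 4) ℤ :=
  (fromBlocks A B C D).reindex finSumFinEquiv finSumFinEquiv

lemma blk_ofBlocks (A B C D : Matrix (Fin 2) (Fin 2) ℤ) (r s : Fin 2) :
    blk (ofBlocks A B C D) r s = (![![A, B], ![C, D]] r s).map ((↑) : ℤ → ℂ) := by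
  ext i k
  fin_cases r <;> fin_cases s <;> fin_cases i <;> fin_cases k <;> rfl

lemma ofBlocks_mem_Sp4Z {A B C D : Matrix (Fin 2) (Fin 2) ℤ} (hAC : Aᵀ * C = Cᵀ * A)
    (hBD : Bᵀ * D = Dᵀ * B) (hAD : Aᵀ * D - Cᵀ * B = 1) : ofBlocks A B C D ∈ Sp4Z := by
  have hJ : J4 = ofBlocks 0 1 (-1) 0 := by
    ext i k
    fin_cases i <;> fin_cases k <;> rfl
  have hDA : Dᵀ * A - Bᵀ * C = 1 := by
    simpa [Matrix.transpose_mul] using congrArg Matrix.transpose hAD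
  have hJ' : Matrix.fromBlocks 0 1 (-1) 0 = Matrix.fromBlocks (Aᵀ * C - Cᵀ * A) (Aᵀ * D - Cᵀ * B)
      (-(Dᵀ * A - Bᵀ * C)) (Bᵀ * D - Dᵀ * B) := by
    rw [hAC, hBD, hAD, hDA, sub_self, sub_self]
  rw [Sp4Z, Set.mem_ofPred_eq, hJ]
  simp only [ofBlocks, Matrix.reindex_apply, Matrix.transpose_submatrix,
    Matrix.submatrix_mul_equiv, Matrix.fromBlocks_transpose, Matrix.fromBlocks_multiply]
  rw [hJ']
  congr 2 <;> simp <;> abel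

lemma den_ofBlocks (A B C D : Matrix (Fin 2) (Fin 2) ℤ) (τ : Fin 2 → Fin 2 → ℂ) :
    den (ofBlocks A B C D) τ = C.map ((↑) : ℤ → ℂ) * Matrix.of τ + D.map ((↑) : ℤ → ℂ) := by
  simp [den, blk_ofBlocks]

lemma moeb_ofBlocks_eq {A B C D : Matrix (Fin 2) (Fin 2) ℤ} {τ σ : Fin 2 → Fin 2 → ℂ}
    (hden : IsUnit (den (ofBlocks A B C D) τ).det)
    (hσ : Matrix.of σ * den (ofBlocks A B C D) τ =
      A.map ((↑) : ℤ → ℂ) * Matrix.of τ + B.map ((↑) : ℤ → ℂ)) :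
    moeb (ofBlocks A B C D) τ = σ := by
  funext i k
  simp [moeb, blk_ofBlocks, ← hσ, Matrix.mul_nonsing_inv_cancel_right _ _ hden]

lemma symAct_one (j : ℕ) (v : Fin (j + 1) → ℂ) : symAct j 1 v = v := by
  funext i
  simp [symAct, symCoeff, Polynomial.coeff_X_pow, Fin.val_inj]

namespace IsSiegelCuspForm

variable {j k : ℕ} {F : (Fin 2 → Fin 2 → ℂ) → (Fin (j + 1) → ℂ)} {τ : Fin 2 → Fin 2 → ℂ}

lemma apply_of_mul_den_eq (hF : IsSiegelCuspForm j k Sp4Z (fun _ => 1) F) (hτ : τ ∈ H2)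
    {A B C D : Matrix (Fin 2) (Fin 2) ℤ} (hγ : ofBlocks A B C D ∈ Sp4Z)
    (hdet : (C.map ((↑) : ℤ → ℂ) * Matrix.of τ + D.map ((↑) : ℤ → ℂ)).det ≠ 0)
    {σ : Fin 2 → Fin 2 → ℂ}
    (hσ : Matrix.of σ * (C.map ((↑) : ℤ → ℂ) * Matrix.of τ + D.map ((↑) : ℤ → ℂ)) =
      A.map ((↑) : ℤ → ℂ) * Matrix.of τ + B.map ((↑) : ℤ → ℂ)) :
    F σ = (C.map ((↑) : ℤ → ℂ) * Matrix.of τ + D.map ((↑) : ℤ → ℂ)).det ^ k •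
      symAct j (C.map ((↑) : ℤ → ℂ) * Matrix.of τ + D.map ((↑) : ℤ → ℂ)) (F τ) := by
  rw [← den_ofBlocks A B] at hdet hσ ⊢
  rw [← moeb_ofBlocks_eq hdet.isUnit hσ, hF.2.1 _ hγ τ hτ, one_smul, wt, zpow_natCast]

lemma apply_add (hF : IsSiegelCuspForm j k Sp4Z (fun _ => 1) F) (hτ : τ ∈ H2)
    {S : Matrix (Fin 2) (Fin 2) ℤ} (hS : S.IsSymm) :
    F (τ + Matrix.of.symm (S.map ((↑) : ℤ → ℂ))) = F τ := by
  have h := hF.apply_of_mul_den_eq hτ (A := 1) (B := S) (C := 0) (D := 1)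
    (σ := τ + Matrix.of.symm (S.map ((↑) : ℤ → ℂ)))
    (ofBlocks_mem_Sp4Z (by simp) (by simpa using hS.eq) (by simp)) (by simp)
    (by simp [← Matrix.of_add_of])
  simpa [symAct_one] using h

lemma apply_conj (hF : IsSiegelCuspForm j k Sp4Z (fun _ => 1) F) (hτ : τ ∈ H2)
    {U V : Matrix (Fin 2) (Fin 2) ℤ} (hVU : V * U = 1) :
    F (Matrix.of.symm (U.map ((↑) : ℤ → ℂ) * Matrix.of τ * Uᵀ.map ((↑) : ℤ → ℂ))) =
      (V.det : ℂ) ^ k • symAct j (Vᵀ.map ((↑) : ℤ → ℂ)) (F τ) := by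
  have hUV : (Uᵀ * Vᵀ).map ((↑) : ℤ → ℂ) = 1 := by
    rw [← Matrix.transpose_mul, hVU]
    simp
  have hdet : ((Vᵀ.map ((↑) : ℤ → ℂ)).det) = V.det := by
    rw [← det_transpose V]
    exact (Int.castRingHom ℂ).map_det Vᵀ |>.symm
  have hne : (V.det : ℂ) ≠ 0 := by
    have := congrArg Matrix.det hVU
    rw [Matrix.det_mul, Matrix.det_one] at this
    exact_mod_cast left_ne_zero_of_mul_eq_one this
  have h := hF.apply_of_mul_den_eq hτ (A := U) (B := 0) (C := 0) (D := Vᵀ)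
    (σ := Matrix.of.symm (U.map ((↑) : ℤ → ℂ) * Matrix.of τ * Uᵀ.map ((↑) : ℤ → ℂ)))
    (ofBlocks_mem_Sp4Z (by simp) (by simp) (by simp [← Matrix.transpose_mul, hVU]))
    (by simpa [hdet] using hne) ?_
  · simpa [hdet] using h
  · have hmul := Matrix.map_mul (L := Uᵀ) (M := Vᵀ) (f := Int.castRingHom ℂ)
    rw [Int.coe_castRingHom] at hmul
    simp [Matrix.mul_assoc, ← hmul, hUV]

lemma apply_inv (hF : IsSiegelCuspForm j k Sp4Z (fun _ => 1) F) {τ₁ z τ₂ : ℂ}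
    (hτ : siegelPoint τ₁ z τ₂ ∈ H2) :
    F (siegelPoint (-1 / τ₁) (z / τ₁) (τ₂ - z ^ 2 / τ₁)) =
      τ₁ ^ k • symAct j !![τ₁, z; 0, 1] (F (siegelPoint τ₁ z τ₂)) := by
  have hτ₁ : τ₁ ≠ 0 := by
    rintro rfl
    exact lt_irrefl _ (siegelPoint_mem_H2_iff.1 hτ).1
  have hden : (!![1, 0; 0, 0] : Matrix (Fin 2) (Fin 2) ℤ).map ((↑) : ℤ → ℂ) *
      Matrix.of (siegelPoint τ₁ z τ₂) +
      (!![0, 0; 0, 1] : Matrix (Fin 2) (Fin 2) ℤ).map ((↑) : ℤ → ℂ) = !![τ₁, z; 0, 1] := by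
    ext i k
    fin_cases i <;> fin_cases k <;> simp [siegelPoint, Matrix.mul_apply]
  have h := hF.apply_of_mul_den_eq hτ (A := !![0, 0; 0, 1]) (B := !![-1, 0; 0, 0])
    (C := !![1, 0; 0, 0]) (D := !![0, 0; 0, 1])
    (σ := siegelPoint (-1 / τ₁) (z / τ₁) (τ₂ - z ^ 2 / τ₁))
    (ofBlocks_mem_Sp4Z (by decide) (by decide) (by decide)) (by simpa [hden] using hτ₁) ?_
  · simpa [hden] using h
  · rw [hden]
    ext i k
    fin_cases i <;> fin_cases k <;> simp [siegelPoint, Matrix.mul_apply] <;> field_simp <;> ring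

end IsSiegelCuspForm

end SiegelTransformations

/-! ### Fourier coefficients of Siegel cusp forms -/

section FourierCoefficients

/-- The exponential `𝐞 (tr (Tτ))`, where `T = (n, r, m)` encodes the half-integral symmetric matrix
of the binary quadratic form `n x² + r x y + m y²`. -/
def siegelChar (T : ℤ × ℤ × ℤ) (τ : Fin 2 → Fin 2 → ℂ) : ℂ :=
  𝐞 (T.1 * τ 0 0 + T.2.1 * τ 0 1 + T.2.2 * τ 1 1)

/-- `F` is given on `ℍ₂` by the absolutely convergent Fourier series with coefficients `a`. -/
def HasFourierExpansion {j : ℕ} (F : (Fin 2 → Fin 2 → ℂ) → (Fin (j + 1) → ℂ))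
    (a : ℤ × ℤ × ℤ → Fin (j + 1) → ℂ) : Prop :=
  ∀ τ ∈ H2, HasSum (fun T => siegelChar T τ • a T) (F τ)

/-- The binary form `T` composed with the linear substitution `U`, that is `Uᵀ T U`. -/
def formComp (U : Matrix (Fin 2) (Fin 2) ℤ) (T : ℤ × ℤ × ℤ) : ℤ × ℤ × ℤ :=
  (T.1 * U 0 0 ^ 2 + T.2.1 * (U 0 0 * U 1 0) + T.2.2 * U 1 0 ^ 2,
    2 * T.1 * (U 0 0 * U 0 1) + T.2.1 * (U 0 0 * U 1 1 + U 0 1 * U 1 0) +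
      2 * T.2.2 * (U 1 0 * U 1 1),
    T.1 * U 0 1 ^ 2 + T.2.1 * (U 0 1 * U 1 1) + T.2.2 * U 1 1 ^ 2)

lemma formComp_mul (U V : Matrix (Fin 2) (Fin 2) ℤ) (T : ℤ × ℤ × ℤ) :
    formComp (U * V) T = formComp V (formComp U T) := by
  simp only [formComp, Matrix.mul_apply, Fin.sum_univ_two, Prod.mk.injEq]
  refine ⟨?_, ?_, ?_⟩ <;> ring

lemma formComp_one (T : ℤ × ℤ × ℤ) : formComp 1 T = T := by
  simp [formComp]

lemma siegelChar_conj {τ : Fin 2 → Fin 2 → ℂ} (hτ : τ ∈ H2) (U : Matrix (Fin 2) (Fin 2) ℤ)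
    (T : ℤ × ℤ × ℤ) :
    siegelChar T (Matrix.of.symm (U.map ((↑) : ℤ → ℂ) * Matrix.of τ * Uᵀ.map ((↑) : ℤ → ℂ))) =
      siegelChar (formComp U T) τ := by
  have hsymm : τ 1 0 = τ 0 1 := hτ.1.apply 0 1
  simp only [siegelChar, formComp, Matrix.of_symm_apply, Matrix.mul_apply, Fin.sum_univ_two,
    Matrix.map_apply, Matrix.transpose_apply, Matrix.of_apply, hsymm]
  congr 1
  push_cast
  ring

lemma norm_siegelChar (T : ℤ × ℤ × ℤ) (τ : Fin 2 → Fin 2 → ℂ) :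
    ‖siegelChar T τ‖ = Real.exp
      (-(2 * Real.pi * (T.1 * (τ 0 0).im + T.2.1 * (τ 0 1).im + T.2.2 * (τ 1 1).im))) := by
  simp [siegelChar, norm_expTwoPiI]

/-- The cone of the imaginary parts of points of `ℍ₂`, in the coordinates `(τ₁, z, τ₂)`. -/
def posDefCone : Set (Fin 3 → ℝ) := {y | 0 < y 0 ∧ y 1 ^ 2 < y 0 * y 2}

lemma isOpen_posDefCone : IsOpen posDefCone :=
  (isOpen_lt continuous_const (continuous_apply (0 : Fin 3))).inter
    (isOpen_lt (by fun_prop) (by fun_prop) : IsOpen {y : Fin 3 → ℝ | y 1 ^ 2 < y 0 * y 2})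

lemma convex_posDefCone : Convex ℝ posDefCone := by
  have himage : posDefCone = {y | !![y 0, y 1; y 1, y 2].PosDef} := by
    ext y
    exact posDef_fin_two_iff.symm
  rw [himage, convex_iff_forall_pos]
  intro x hx y hy s t hs ht _
  have hadd : !![(s • x + t • y) 0, (s • x + t • y) 1; (s • x + t • y) 1, (s • x + t • y) 2] =
      s • !![x 0, x 1; x 1, x 2] + t • !![y 0, y 1; y 1, y 2] := by
    simp
  exact (congrArg Matrix.PosDef hadd).mpr ((Matrix.PosDef.smul hx hs).add (.smul hy ht))

/-- Coordinates on the exponents of a Fourier series in three variables. -/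
def finThreeArrowEquiv : (Fin 3 → ℤ) ≃ ℤ × ℤ × ℤ where
  toFun n := (n 0, n 1, n 2)
  invFun T := ![T.1, T.2.1, T.2.2]
  left_inv n := by funext i; fin_cases i <;> rfl
  right_inv T := rfl

lemma siegelChar_finThreeArrowEquiv (n : Fin 3 → ℤ) (w : Fin 3 → ℂ) :
    siegelChar (finThreeArrowEquiv n) (siegelPoint (w 0) (w 1) (w 2)) = 𝐞 (∑ i, n i * w i) := by
  simp only [siegelChar, siegelPoint, Fin.sum_univ_three]
  rfl

lemma eq_zero_of_hasSum_siegelChar_zero {j : ℕ} {b : ℤ × ℤ × ℤ → Fin (j + 1) → ℂ}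
    (hb : ∀ τ ∈ H2, HasSum (fun T => siegelChar T τ • b T) 0) : b = 0 := by
  have hzero (l : Fin (j + 1)) : (fun n => b (finThreeArrowEquiv n) l) = 0 := by
    refine eq_zero_of_hasSum_fourier_zero (y := ![1, 0, 1]) fun x => ?_
    have hmem : siegelPoint (x 0 + I) (x 1) (x 2 + I) ∈ H2 := by simp [siegelPoint_mem_H2_iff]
    have hsum := finThreeArrowEquiv.hasSum_iff.2 (Pi.hasSum.1 (hb _ hmem) l)
    refine hsum.congr_fun fun n => ?_
    have := siegelChar_finThreeArrowEquiv n fun i => x i + (![1, 0, 1] : Fin 3 → ℝ) i * I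
    simp_all [mul_comm]
  funext T l
  simpa using congrFun (hzero l) (finThreeArrowEquiv.symm T)

lemma eq_zero_of_hasSum_expTwoPiI_zero {b : ℤ → ℂ} {y : ℝ}
    (hb : ∀ x : ℝ, HasSum (fun n => b n * 𝐞 (n * (x + y * I))) 0) : b = 0 := by
  have hzero : (fun n : Unit → ℤ => b (n ())) = 0 := by
    refine eq_zero_of_hasSum_fourier_zero (y := fun _ => y) fun x => ?_
    simpa [Function.comp_def] using (Equiv.funUnique Unit ℤ).hasSum_iff.2 (hb (x ()))
  funext n
  exact congrFun hzero fun _ => n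

lemma hasSum_symAct {ι : Type*} {j : ℕ} (M : Matrix (Fin 2) (Fin 2) ℂ)
    {f : ι → Fin (j + 1) → ℂ} {v : Fin (j + 1) → ℂ} (hf : HasSum f v) :
    HasSum (fun i => symAct j M (f i)) (symAct j M v) :=
  Pi.hasSum.2 fun _ => hasSum_sum fun l _ => (Pi.hasSum.1 hf l).mul_left _

variable {j k : ℕ} {F : (Fin 2 → Fin 2 → ℂ) → (Fin (j + 1) → ℂ)}
  {a : ℤ × ℤ × ℤ → Fin (j + 1) → ℂ}

theorem IsSiegelCuspForm.exists_hasFourierExpansion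
    (hF : IsSiegelCuspForm j k Sp4Z (fun _ => 1) F) : ∃ a, HasFourierExpansion F a := by
  set P : (Fin 3 → ℂ) → Fin 2 → Fin 2 → ℂ := fun w => siegelPoint (w 0) (w 1) (w 2)
  have hmem (w : Fin 3 → ℂ) (hw : imVec w ∈ posDefCone) : P w ∈ H2 := siegelPoint_mem_H2_iff.2 hw
  have hP : Differentiable ℂ P := by
    refine differentiable_pi.2 fun i => differentiable_pi.2 fun k => ?_
    fin_cases i <;> fin_cases k
    exacts [differentiable_apply 0, differentiable_apply 1, differentiable_apply 1,
      differentiable_apply 2]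
  have hper (l : Fin (j + 1)) : IsPeriodicHolomorphic posDefCone fun w => F (P w) l := by
    refine ⟨differentiableOn_pi.1 (hF.1.comp hP.differentiableOn hmem) l, fun w hw n => ?_⟩
    rw [← hF.apply_add (hmem w hw) (S := !![n 0, n 1; n 1, n 2])
      (by ext i k; fin_cases i <;> fin_cases k <;> rfl)]
    congr 2
    funext i k
    fin_cases i <;> fin_cases k <;> rfl
  choose a ha using fun l => (hper l).exists_hasSum_fourier isOpen_posDefCone convex_posDefCone
  refine ⟨fun T l => a l (finThreeArrowEquiv.symm T), fun τ hτ => Pi.hasSum.2 fun l => ?_⟩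
  have hτP : τ = P ![τ 0 0, τ 0 1, τ 1 1] := eq_siegelPoint_of_mem_H2 hτ
  have hcone : imVec ![τ 0 0, τ 0 1, τ 1 1] ∈ posDefCone := by
    rw [hτP] at hτ
    exact siegelPoint_mem_H2_iff.1 hτ
  rw [← finThreeArrowEquiv.hasSum_iff]
  have := ha l _ hcone
  rw [← hτP] at this
  refine this.congr_fun fun n => ?_
  rw [mul_comm, ← siegelChar_finThreeArrowEquiv n ![τ 0 0, τ 0 1, τ 1 1]]
  simpa [P] using congrArg (fun σ => siegelChar (finThreeArrowEquiv n) σ * a l n) hτP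

theorem IsSiegelCuspForm.coeff_formComp (hF : IsSiegelCuspForm j k Sp4Z (fun _ => 1) F)
    (ha : HasFourierExpansion F a) {U V : Matrix (Fin 2) (Fin 2) ℤ} (hVU : V * U = 1)
    (T : ℤ × ℤ × ℤ) :
    a T = (V.det : ℂ) ^ k • symAct j (Vᵀ.map ((↑) : ℤ → ℂ)) (a (formComp U T)) := by
  let E : ℤ × ℤ × ℤ ≃ ℤ × ℤ × ℤ :=
    { toFun := formComp U
      invFun := formComp V
      left_inv T := by rw [← formComp_mul, mul_eq_one_comm.1 hVU, formComp_one]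
      right_inv T := by rw [← formComp_mul, hVU, formComp_one] }
  have hzero : (fun T => a (E.symm T) -
      (V.det : ℂ) ^ k • symAct j (Vᵀ.map ((↑) : ℤ → ℂ)) (a T)) = 0 := by
    refine eq_zero_of_hasSum_siegelChar_zero fun τ hτ => ?_
    have hleft := E.symm.hasSum_iff.2 (ha _ (conj_mem_H2 hτ hVU))
    have hright := (hasSum_symAct (Vᵀ.map ((↑) : ℤ → ℂ)) (ha τ hτ)).const_smul ((V.det : ℂ) ^ k)
    rw [hF.apply_conj hτ hVU] at hleft
    rw [← sub_self ((V.det : ℂ) ^ k • symAct j _ (F τ))]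
    refine (hleft.sub hright).congr_fun fun T => ?_
    have hE : formComp U (E.symm T) = T := E.apply_symm_apply T
    simp only [Function.comp_apply, siegelChar_conj hτ, hE, symAct_smul]
    rw [smul_sub, smul_comm]
  have := congrFun hzero (E T)
  rwa [E.symm_apply_apply, Pi.zero_apply, sub_eq_zero] at this

end FourierCoefficients

section CoefficientSupport

variable {j k : ℕ} {F : (Fin 2 → Fin 2 → ℂ) → (Fin (j + 1) → ℂ)}
  {a : ℤ × ℤ × ℤ → Fin (j + 1) → ℂ}

lemma HasFourierExpansion.exists_norm_coeff_le (ha : HasFourierExpansion F a) :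
    ∃ C, 0 ≤ C ∧ ∀ T, ‖a T‖ ≤ C * Real.exp (2 * Real.pi * (T.1 + T.2.2)) := by
  have hmem : siegelPoint I 0 I ∈ H2 := by simp [siegelPoint_mem_H2_iff]
  obtain ⟨C, hC⟩ := (ha _ hmem).summable.norm.tendsto_cofinite_zero.bddAbove_range_of_cofinite
  have hle (T : ℤ × ℤ × ℤ) : ‖siegelChar T (siegelPoint I 0 I) • a T‖ ≤ C := hC ⟨T, rfl⟩
  refine ⟨C, (norm_nonneg _).trans (hle 0), fun T => ?_⟩
  have hchar : ‖siegelChar T (siegelPoint I 0 I)‖ =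
      (Real.exp (2 * Real.pi * (T.1 + T.2.2)))⁻¹ := by
    simp [norm_siegelChar, siegelPoint, Real.exp_neg]
  have hT := hle T
  rwa [norm_smul, hchar, inv_mul_le_iff₀ (Real.exp_pos _), mul_comm] at hT

lemma symCoeff_upperTriangular (τ x : ℂ) (l i : Fin (j + 1)) :
    symCoeff j !![τ, x; 0, 1] l i =
      τ ^ (j - (l : ℕ)) * (x ^ ((l : ℕ) - i) * ((l : ℕ).choose i : ℂ)) := by
  have hpoly : symCoeff j !![τ, x; 0, 1] l i = (Polynomial.C (τ ^ (j - (l : ℕ))) *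
      (Polynomial.X + Polynomial.C x) ^ (l : ℕ)).coeff i := by
    simp [symCoeff, add_comm]
  rw [hpoly, Polynomial.coeff_C_mul, Polynomial.coeff_X_add_C_pow]

lemma symAct_upperTriangular_apply (τ x : ℂ) {L : Fin (j + 1)} {v : Fin (j + 1) → ℂ}
    (hv : ∀ l, L < l → v l = 0) :
    symAct j !![τ, x; 0, 1] v L = τ ^ (j - (L : ℕ)) * v L := by
  rw [symAct, Finset.sum_eq_single L ?_ (by simp), symCoeff_upperTriangular]
  · simp
  · intro l _ hl
    rcases hl.lt_or_gt with hlt | hgt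
    · simp [symCoeff_upperTriangular, Nat.choose_eq_zero_of_lt hlt]
    · rw [hv l hgt, mul_zero]

lemma norm_symAct_shear_le (x : ℂ) (v : Fin (j + 1) → ℂ) :
    ‖symAct j !![1, x; 0, 1] v‖ ≤ (j + 1) * ((1 + ‖x‖) ^ j * ‖v‖) := by
  have hcoeff (l i : Fin (j + 1)) : ‖symCoeff j !![1, x; 0, 1] l i‖ ≤ (1 + ‖x‖) ^ j := by
    rw [symCoeff_upperTriangular, one_pow, one_mul, norm_mul, norm_pow, Complex.norm_natCast]
    rcases lt_or_ge (l : ℕ) i with hli | hil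
    · rw [Nat.choose_eq_zero_of_lt hli]
      simp only [Nat.cast_zero, mul_zero]
      positivity
    · calc ‖x‖ ^ ((l : ℕ) - i) * ((l : ℕ).choose i : ℝ) ≤ (1 + ‖x‖) ^ (l : ℕ) := by
            rw [add_pow]
            have := Finset.single_le_sum (s := Finset.range (l + 1))
              (f := fun m => 1 ^ m * ‖x‖ ^ ((l : ℕ) - m) * ((l : ℕ).choose m : ℝ))
              (fun m _ => by positivity) (Finset.mem_range.2 (Nat.lt_succ_of_le hil))
            simpa using this
        _ ≤ (1 + ‖x‖) ^ j := by
            gcongr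
            exacts [by linarith [norm_nonneg x], Nat.lt_succ_iff.1 l.2]
  refine (pi_norm_le_iff_of_nonneg (by positivity)).2 fun i => ?_
  calc ‖∑ l, symCoeff j !![1, x; 0, 1] l i * v l‖
      ≤ ∑ l, ‖symCoeff j !![1, x; 0, 1] l i * v l‖ := norm_sum_le _ _
    _ ≤ ∑ _l : Fin (j + 1), (1 + ‖x‖) ^ j * ‖v‖ := by
        gcongr with l
        rw [norm_mul]
        exact mul_le_mul (hcoeff l i) (norm_le_pi_norm v l) (norm_nonneg _) (by positivity)
    _ = (j + 1) * ((1 + ‖x‖) ^ j * ‖v‖) := by simp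

lemma formComp_shear (n r m s : ℤ) :
    formComp !![1, 0; s, 1] (n, r, m) = (n + r * s + m * s ^ 2, r + 2 * m * s, m) := by
  simp [formComp]

lemma IsSiegelCuspForm.coeff_shear (hF : IsSiegelCuspForm j k Sp4Z (fun _ => 1) F)
    (ha : HasFourierExpansion F a) (n r m s : ℤ) :
    a (n, r, m) =
      symAct j !![1, -(s : ℂ); 0, 1] (a (n + r * s + m * s ^ 2, r + 2 * m * s, m)) := by
  have hVU : (!![1, 0; -s, 1] : Matrix (Fin 2) (Fin 2) ℤ) * !![1, 0; s, 1] = 1 := by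
    simp [Matrix.one_fin_two]
  have hmap : ((!![1, 0; -s, 1] : Matrix (Fin 2) (Fin 2) ℤ)ᵀ.map ((↑) : ℤ → ℂ)) =
      !![1, -(s : ℂ); 0, 1] := by
    ext i l
    fin_cases i <;> fin_cases l <;> simp
  have h := hF.coeff_formComp ha hVU (n, r, m)
  rwa [hmap, formComp_shear, det_fin_two_of, mul_one, zero_mul, sub_zero, Int.cast_one, one_pow,
    one_smul] at h

lemma tendsto_one_add_pow_mul_exp_neg (i : ℕ) :
    Tendsto (fun t : ℕ => (1 + t : ℝ) ^ i * Real.exp (-(2 * Real.pi * t))) atTop (𝓝 0) := by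
  have hlt : |Real.exp (-(2 * Real.pi))| < 1 := by
    rw [Real.abs_exp, Real.exp_lt_one_iff]
    linarith [Real.pi_pos]
  have hlim := ((tendsto_pow_const_mul_const_pow_of_abs_lt_one i hlt).comp
    (tendsto_add_atTop_nat 1)).mul_const (Real.exp (2 * Real.pi))
  rw [zero_mul] at hlim
  refine hlim.congr fun t => ?_
  rw [Function.comp_apply, mul_assoc, ← Real.exp_nat_mul, ← Real.exp_add]
  push_cast
  ring_nf

/-- The shear `!![1, 0; s, 1]` changes `a (n, r, m)` by a factor polynomial in `s`, while the
Fourier expansion at the scalar matrix `i` bounds it by the exponential of `n + r s + m s² + m`. -/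
lemma IsSiegelCuspForm.coeff_eq_zero_of_neg_or (hF : IsSiegelCuspForm j k Sp4Z (fun _ => 1) F)
    (ha : HasFourierExpansion F a) {n r m : ℤ} (h : m < 0 ∨ m = 0 ∧ r ≠ 0) : a (n, r, m) = 0 := by
  obtain ⟨C, hC₀, hC⟩ := ha.exists_norm_coeff_le
  obtain ⟨σ, hσ, hrσ⟩ : ∃ σ : ℤ, |σ| = 1 ∧ r * σ = -|r| := by
    rcases le_total 0 r with hr | hr
    · exact ⟨-1, by simp, by rw [abs_of_nonneg hr, mul_neg_one]⟩
    · exact ⟨1, by simp, by rw [abs_of_nonpos hr, mul_one, neg_neg]⟩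
  have hform (t : ℕ) : r * (σ * t) + m * (σ * t) ^ 2 ≤ -t := by
    have hσt : (σ * t) ^ 2 = (t : ℤ) ^ 2 := by rw [mul_pow, ← sq_abs, hσ, one_pow, one_mul]
    have ht : (0 : ℤ) ≤ t := Int.natCast_nonneg t
    rw [← mul_assoc, hrσ, hσt]
    rcases h with hm | ⟨rfl, hr⟩
    · nlinarith [mul_nonneg (abs_nonneg r) ht, Int.le_self_sq (t : ℤ)]
    · nlinarith [Int.one_le_abs hr]
  have hbound (t : ℕ) : ‖a (n, r, m)‖ ≤ (j + 1) * C * Real.exp (2 * Real.pi * (n + m)) *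
      ((1 + t) ^ j * Real.exp (-(2 * Real.pi * t))) := by
    have hnorm : ‖-((σ * t : ℤ) : ℂ)‖ = t := by
      rw [norm_neg, Complex.norm_intCast, ← Int.cast_abs, abs_mul, hσ]
      simp
    have hexp : ((n + r * (σ * t) + m * (σ * t) ^ 2 : ℤ) : ℝ) + m ≤ n + m + -t := by
      have : ((r * (σ * t) + m * (σ * t) ^ 2 : ℤ) : ℝ) ≤ (-t : ℤ) := Int.cast_le.2 (hform t)
      push_cast at this ⊢
      linarith
    calc ‖a (n, r, m)‖ ≤ (j + 1) * ((1 + t) ^ j *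
          ‖a (n + r * (σ * t) + m * (σ * t) ^ 2, r + 2 * m * (σ * t), m)‖) := by
          conv_lhs => rw [hF.coeff_shear ha n r m (σ * t)]
          simpa only [hnorm] using norm_symAct_shear_le (-((σ * t : ℤ) : ℂ)) _
      _ ≤ (j + 1) * ((1 + t) ^ j * (C * Real.exp (2 * Real.pi * (n + m + -t)))) := by
          gcongr
          exact (hC _).trans (by gcongr)
      _ = _ := by
          rw [mul_add, Real.exp_add, mul_neg]
          ring
  have hlim := (tendsto_one_add_pow_mul_exp_neg j).const_mul
    ((j + 1) * C * Real.exp (2 * Real.pi * (n + m)))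
  rw [mul_zero] at hlim
  exact norm_le_zero_iff.1 (ge_of_tendsto' hlim hbound)

lemma IsSiegelCuspForm.tendsto_siegelPoint (hF : IsSiegelCuspForm j k Sp4Z (fun _ => 1) F) {τ₁ : ℂ}
    (hτ₁ : 0 < τ₁.im) : Tendsto (fun t : ℝ => F (siegelPoint τ₁ 0 (t * I))) atTop (𝓝 0) := by
  have hone : (1 : Matrix (Fin 4) (Fin 4) ℤ) = ofBlocks 1 0 0 1 := by
    simp [ofBlocks]
  have hden (τ : Fin 2 → Fin 2 → ℂ) : den (ofBlocks 1 0 0 1) τ = 1 := by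
    simp [den_ofBlocks]
  have hmoeb (τ : Fin 2 → Fin 2 → ℂ) : moeb (ofBlocks 1 0 0 1) τ = τ :=
    moeb_ofBlocks_eq (by simp [hden]) (by simp [hden])
  refine (hF.2.2.1 1 (by simp [Sp4Z]) τ₁ hτ₁).congr fun t => ?_
  have hdiag : diagH τ₁ (t * I) = siegelPoint τ₁ 0 (t * I) := by
    funext i l
    fin_cases i <;> fin_cases l <;> rfl
  simp [slashS, hone, hden, hmoeb, hdiag, symAct_one]

lemma norm_siegelChar_siegelPoint (T : ℤ × ℤ × ℤ) (τ₁ : ℂ) (t : ℝ) :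
    ‖siegelChar T (siegelPoint τ₁ 0 (t * I))‖ =
      Real.exp (-(2 * Real.pi * (T.1 * τ₁.im))) * Real.exp (-(2 * Real.pi * T.2.2 * t)) := by
  rw [norm_siegelChar, ← Real.exp_add]
  simp [siegelPoint]
  ring_nf

lemma IsSiegelCuspForm.tendsto_siegelChar_smul_coeff
    (hF : IsSiegelCuspForm j k Sp4Z (fun _ => 1) F) (ha : HasFourierExpansion F a) (τ₁ : ℂ)
    (T : ℤ × ℤ × ℤ) : Tendsto (fun t : ℝ => siegelChar T (siegelPoint τ₁ 0 (t * I)) • a T) atTop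
      (𝓝 (if T.2 = 0 then 𝐞 (T.1 * τ₁) • a T else 0)) := by
  obtain ⟨n, r, m⟩ := T
  by_cases hrm : (r, m) = 0
  · obtain ⟨rfl, rfl⟩ := Prod.mk.inj hrm
    simp [siegelChar, siegelPoint]
  rw [if_neg hrm]
  by_cases h : m < 0 ∨ m = 0 ∧ r ≠ 0
  · simp [hF.coeff_eq_zero_of_neg_or ha h]
  have hm : (0 : ℝ) < m := by
    have : 0 < m := by simp_all; omega
    exact_mod_cast this
  refine tendsto_zero_iff_norm_tendsto_zero.2 ?_
  have hexp : Tendsto (fun t : ℝ => Real.exp (-(2 * Real.pi * m * t))) atTop (𝓝 0) :=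
    Real.tendsto_exp_neg_atTop_nhds_zero.comp (tendsto_id.const_mul_atTop (by positivity))
  simpa [norm_smul, norm_siegelChar_siegelPoint] using (hexp.const_mul _).mul_const _

lemma IsSiegelCuspForm.hasSum_coeff_zero_zero (hF : IsSiegelCuspForm j k Sp4Z (fun _ => 1) F)
    (ha : HasFourierExpansion F a) {τ₁ : ℂ} (hτ₁ : 0 < τ₁.im) :
    HasSum (fun n : ℤ => 𝐞 (n * τ₁) • a (n, 0, 0)) 0 := by
  have hmem (t : ℝ) (ht : 0 < t) : siegelPoint τ₁ 0 (t * I) ∈ H2 := by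
    simpa [siegelPoint_mem_H2_iff, hτ₁] using mul_pos hτ₁ ht
  have hsum := (ha _ (hmem 1 one_pos)).summable
  have hlim := tendsto_tsum_of_dominated_convergence (𝓕 := atTop)
    (f := fun (t : ℝ) T => siegelChar T (siegelPoint τ₁ 0 (t * I)) • a T)
    (g := fun T => if T.2 = 0 then 𝐞 (T.1 * τ₁) • a T else 0) hsum.norm
    (hF.tendsto_siegelChar_smul_coeff ha τ₁) ?_
  · have htsum := tendsto_nhds_unique hlim ((hF.tendsto_siegelPoint hτ₁).congr' (by
      filter_upwards [eventually_gt_atTop 0] with t ht using (ha _ (hmem t ht)).tsum_eq.symm))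
    have hinj : Function.Injective fun n : ℤ => ((n, 0, 0) : ℤ × ℤ × ℤ) := fun x y h => by
      simpa using h
    have hsub : Summable fun n : ℤ => 𝐞 (n * τ₁) • a (n, 0, 0) := by
      simpa [Function.comp_def, siegelChar, siegelPoint] using hsum.comp_injective hinj
    rw [← htsum, ← hinj.tsum_eq]
    · simpa using hsub.hasSum
    · intro T hT
      have hT₂ : T.2 = 0 := by simp_all
      exact ⟨T.1, by rw [← Prod.mk_zero_zero] at hT₂; rw [← hT₂]⟩
  · filter_upwards [eventually_ge_atTop 1] with t ht
    rintro ⟨n, r, m⟩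
    by_cases hm : m < 0
    · simp [hF.coeff_eq_zero_of_neg_or ha (.inl hm)]
    have hm' : (0 : ℝ) ≤ m := by exact_mod_cast not_lt.1 hm
    simp only [norm_smul, norm_siegelChar_siegelPoint]
    gcongr

theorem IsSiegelCuspForm.pos_of_coeff_ne_zero (hF : IsSiegelCuspForm j k Sp4Z (fun _ => 1) F)
    (ha : HasFourierExpansion F a) {n r m : ℤ} (h : a (n, r, m) ≠ 0) : 1 ≤ m := by
  by_contra! hm
  by_cases h₁ : m < 0 ∨ m = 0 ∧ r ≠ 0
  · exact h (hF.coeff_eq_zero_of_neg_or ha h₁)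
  obtain ⟨rfl, rfl⟩ : m = 0 ∧ r = 0 := by omega
  refine h (funext fun l => ?_)
  suffices (fun n => a (n, 0, 0) l) = 0 from congrFun this n
  refine eq_zero_of_hasSum_expTwoPiI_zero (y := 1) fun x => ?_
  simpa [mul_comm] using
    Pi.hasSum.1 (hF.hasSum_coeff_zero_zero ha (τ₁ := x + (1 : ℝ) * I) (by simp)) l

lemma IsSiegelCuspForm.coeff_eq_zero_of_formComp (hF : IsSiegelCuspForm j k Sp4Z (fun _ => 1) F)
    (ha : HasFourierExpansion F a) {U V : Matrix (Fin 2) (Fin 2) ℤ} (hVU : V * U = 1)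
    {T : ℤ × ℤ × ℤ} (h : a (formComp U T) = 0) : a T = 0 := by
  rw [hF.coeff_formComp ha hVU, h, symAct_zero, smul_zero]

lemma IsSiegelCuspForm.form_pos_of_coeff_ne_zero (hF : IsSiegelCuspForm j k Sp4Z (fun _ => 1) F)
    (ha : HasFourierExpansion F a) {n r m : ℤ} (h : a (n, r, m) ≠ 0) {q s : ℤ}
    (hqs : IsCoprime q s) : 0 < n * q ^ 2 + r * (q * s) + m * s ^ 2 := by
  obtain ⟨u, v, huv⟩ := hqs
  have hVU : !![s, -q; u, v] * !![v, q; -u, s] = 1 := by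
    ext i l
    fin_cases i <;> fin_cases l <;> simp <;> linarith
  have hne : a (formComp !![v, q; -u, s] (n, r, m)) ≠ 0 :=
    mt (hF.coeff_eq_zero_of_formComp ha hVU) h
  exact Int.lt_of_add_one_le (by simpa [formComp] using hF.pos_of_coeff_ne_zero ha hne)

/-- A positive value at the vertex `(-r : 2n)` of the form means a negative discriminant. -/
theorem IsSiegelCuspForm.posDef_of_coeff_ne_zero (hF : IsSiegelCuspForm j k Sp4Z (fun _ => 1) F)
    (ha : HasFourierExpansion F a) {n r m : ℤ} (h : a (n, r, m) ≠ 0) :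
    1 ≤ n ∧ r ^ 2 < 4 * n * m := by
  have hn : 0 < n := by
    simpa using hF.form_pos_of_coeff_ne_zero ha h (isCoprime_one_left (x := 0))
  obtain ⟨g, x, y, hg, hxy, hx, hy⟩ : ∃ g x y : ℤ, 0 < g ∧ IsCoprime x y ∧ -r = x * g ∧
      2 * n = y * g := by
    obtain ⟨x, y, hxy, hx, hy⟩ := Int.exists_gcd_one (m := -r) (n := 2 * n)
      (Int.gcd_pos_of_ne_zero_right _ (by omega))
    exact ⟨_, x, y, by exact_mod_cast Int.gcd_pos_of_ne_zero_right _ (by omega),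
      Int.isCoprime_iff_gcd_eq_one.2 hxy, hx, hy⟩
  have hform := mul_pos (pow_pos hg 2) (hF.form_pos_of_coeff_ne_zero ha h hxy)
  have hvertex : g ^ 2 * (n * x ^ 2 + r * (x * y) + m * y ^ 2) = n * (4 * n * m - r ^ 2) := by
    linear_combination (-n * (x * g - r) - r * y * g) * hx +
      (m * (y * g + 2 * n) - r ^ 2) * (-hy)
  rw [hvertex] at hform
  exact ⟨hn, sub_pos.1 (pos_of_mul_pos_right hform hn.le)⟩

end CoefficientSupport

/-! ### Fourier–Jacobi coefficients -/

section FourierJacobi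

/-- The Fourier series of a Jacobi form in `(τ, z)`, whose coefficient at `qⁿ ζʳ` is `c (n, r)`. -/
def jacobiSeries (c : ℤ × ℤ → ℂ) (τ z : ℂ) : ℂ := ∑' p, c p * 𝐞 (p.1 * τ + p.2 * z)

/-- The numbers `c (n, r)` are the Fourier coefficients of a Jacobi cusp form of weight `k` and
index `m` for the full Jacobi group. -/
structure IsJacobiCusp (k : ℕ) (m : ℤ) (c : ℤ × ℤ → ℂ) : Prop where
  pos {n r : ℤ} : c (n, r) ≠ 0 → 1 ≤ n ∧ r ^ 2 < 4 * n * m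
  summable {τ : ℂ} (z : ℂ) : 0 < τ.im → Summable fun p => c p * 𝐞 (p.1 * τ + p.2 * z)
  shift (n r t : ℤ) : c (n + r * t + m * t ^ 2, r + 2 * m * t) = c (n, r)
  inv {τ : ℂ} (z : ℂ) : 0 < τ.im →
    jacobiSeries c (-1 / τ) (z / τ) = τ ^ k * 𝐞 (m * z ^ 2 / τ) * jacobiSeries c τ z

variable {j k : ℕ} {F : (Fin 2 → Fin 2 → ℂ) → (Fin (j + 1) → ℂ)}
  {a : ℤ × ℤ × ℤ → Fin (j + 1) → ℂ}

/-- The `m`-th Fourier–Jacobi coefficient of the form on `ℍ₂` with Fourier coefficients `a`. -/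
def fourierJacobiCoeff (a : ℤ × ℤ × ℤ → Fin (j + 1) → ℂ) (m : ℤ) (τ z : ℂ) : Fin (j + 1) → ℂ :=
  fun l => jacobiSeries (fun p => a (p.1, p.2, m) l) τ z

lemma exists_lt_mul_sub {u v w s x : ℝ} (hu : 0 < u) (hv : 0 < v) :
    ∃ Y, s < u * Y ∧ w < v * (Y - x) := by
  have h₁ : ∀ᶠ Y in atTop, s < u * Y :=
    (tendsto_id.const_mul_atTop hu).eventually_gt_atTop s
  have h₂ : ∀ᶠ Y in atTop, w < v * (Y - x) :=
    ((tendsto_atTop_add_const_right _ (-x) tendsto_id).const_mul_atTop hv).eventually_gt_atTop w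
  exact (h₁.and h₂).exists

lemma HasFourierExpansion.summable_fourierJacobi (ha : HasFourierExpansion F a) (m : ℤ)
    (l : Fin (j + 1)) {τ : ℂ} (z : ℂ) (hτ : 0 < τ.im) :
    Summable fun p : ℤ × ℤ => a (p.1, p.2, m) l * 𝐞 (p.1 * τ + p.2 * z) := by
  obtain ⟨Y, hY⟩ := ((tendsto_id.const_mul_atTop hτ).eventually_gt_atTop (z.im ^ 2)).exists
  have hmem : siegelPoint τ z (Y * I) ∈ H2 := siegelPoint_mem_H2_iff.2 ⟨hτ, by simpa using hY⟩
  have hinj : Function.Injective fun p : ℤ × ℤ => ((p.1, p.2, m) : ℤ × ℤ × ℤ) := by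
    rintro ⟨n, r⟩ ⟨n', r'⟩ h
    simpa using h
  refine (((Pi.summable.1 (ha _ hmem).summable l).comp_injective hinj).mul_right
    (𝐞 (m * (Y * I)))⁻¹).congr fun p => ?_
  simp only [Function.comp_apply, Pi.smul_apply, smul_eq_mul, siegelChar, siegelPoint]
  rw [eq_comm, eq_mul_inv_iff_mul_eq₀ (expTwoPiI_ne_zero _), mul_assoc, ← expTwoPiI_add, mul_comm]
  simp

theorem HasFourierExpansion.hasSum_fourierJacobiCoeff (ha : HasFourierExpansion F a) {τ z τ₂ : ℂ}
    (h : siegelPoint τ z τ₂ ∈ H2) :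
    HasSum (fun m : ℤ => 𝐞 (m * τ₂) • fourierJacobiCoeff a m τ z) (F (siegelPoint τ z τ₂)) := by
  let e : ℤ × (ℤ × ℤ) ≃ ℤ × ℤ × ℤ :=
    { toFun p := (p.2.1, p.2.2, p.1)
      invFun T := (T.2.2, T.1, T.2.1) }
  refine Pi.hasSum.2 fun l => ?_
  refine (e.hasSum_iff.2 (Pi.hasSum.1 (ha _ h) l)).prod_fiberwise fun m => ?_
  have hm := (ha.summable_fourierJacobi m l z (siegelPoint_mem_H2_iff.1 h).1).hasSum
  refine (hm.mul_left (𝐞 (m * τ₂))).congr_fun fun p => ?_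
  simp only [e, Function.comp_apply, Equiv.coe_fn_mk, Pi.smul_apply, smul_eq_mul]
  rw [mul_left_comm, ← expTwoPiI_add, mul_comm]
  simp [siegelChar, siegelPoint, add_comm]

theorem IsSiegelCuspForm.fourierJacobiCoeff_inv (hF : IsSiegelCuspForm j k Sp4Z (fun _ => 1) F)
    (ha : HasFourierExpansion F a) (m : ℤ) {τ : ℂ} (z : ℂ) (hτ : 0 < τ.im) :
    fourierJacobiCoeff a m (-1 / τ) (z / τ) =
      (τ ^ k * 𝐞 (m * z ^ 2 / τ)) • symAct j !![τ, z; 0, 1] (fourierJacobiCoeff a m τ z) := by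
  obtain ⟨Y, hY, hY'⟩ := exists_lt_mul_sub (s := z.im ^ 2) (w := (z / τ).im ^ 2)
    (x := (z ^ 2 / τ).im) hτ (neg_one_div_mem_upperHalfPlaneSet hτ)
  funext l
  have hzero : (fun m : ℤ => 𝐞 (-(m * z ^ 2 / τ)) * fourierJacobiCoeff a m (-1 / τ) (z / τ) l -
      τ ^ k * symAct j !![τ, z; 0, 1] (fourierJacobiCoeff a m τ z) l) = 0 := by
    refine eq_zero_of_hasSum_expTwoPiI_zero (y := Y) fun x => ?_
    have hmem : siegelPoint τ z (x + Y * I) ∈ H2 :=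
      siegelPoint_mem_H2_iff.2 ⟨hτ, by simpa using hY⟩
    have hmem' : siegelPoint (-1 / τ) (z / τ) (x + Y * I - z ^ 2 / τ) ∈ H2 :=
      siegelPoint_mem_H2_iff.2 ⟨neg_one_div_mem_upperHalfPlaneSet hτ, by simpa using hY'⟩
    have hleft := Pi.hasSum.1 (ha.hasSum_fourierJacobiCoeff hmem') l
    have hright := Pi.hasSum.1 ((hasSum_symAct !![τ, z; 0, 1]
      (ha.hasSum_fourierJacobiCoeff hmem)).const_smul (τ ^ k)) l
    rw [hF.apply_inv hmem] at hleft
    have hsub := hleft.sub hright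
    rw [sub_self] at hsub
    refine hsub.congr_fun fun m => ?_
    have hexp : 𝐞 (m * (x + Y * I - z ^ 2 / τ)) = 𝐞 (m * (x + Y * I)) * 𝐞 (-(m * z ^ 2 / τ)) := by
      rw [← expTwoPiI_add]
      ring_nf
    simp only [symAct_smul, Pi.smul_apply, smul_eq_mul, hexp]
    ring
  have hm := sub_eq_zero.1 (congrFun hzero m)
  have hinv : 𝐞 (m * z ^ 2 / τ) * 𝐞 (-(m * z ^ 2 / τ)) = 1 := by
    rw [← expTwoPiI_add, add_neg_cancel]
    simpa using expTwoPiI_intCast 0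
  rw [Pi.smul_apply, smul_eq_mul, mul_right_comm, ← hm, mul_right_comm, mul_comm (𝐞 _), hinv,
    one_mul]

theorem IsSiegelCuspForm.isJacobiCusp_coeff (hF : IsSiegelCuspForm j k Sp4Z (fun _ => 1) F)
    (ha : HasFourierExpansion F a) {m : ℤ} {L : Fin (j + 1)}
    (hL : ∀ n r l, L < l → a (n, r, m) l = 0) :
    IsJacobiCusp (k + (j - L)) m fun p => a (p.1, p.2, m) L where
  pos h := hF.posDef_of_coeff_ne_zero ha fun hzero => h (congrFun hzero L)
  summable z hτ := ha.summable_fourierJacobi m L z hτ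
  shift n r t := by
    have h := congrFun (hF.coeff_shear ha n r m t) L
    rw [symAct_upperTriangular_apply _ _ (hL _ _), one_pow, one_mul] at h
    exact h.symm
  inv {τ} z hτ := by
    have h := congrFun (hF.fourierJacobiCoeff_inv ha m z hτ) L
    rw [Pi.smul_apply, symAct_upperTriangular_apply, smul_eq_mul] at h
    · rw [pow_add, mul_right_comm _ (τ ^ (j - (L : ℕ))), mul_assoc _ (τ ^ (j - (L : ℕ)))]
      exact h
    · intro l hl
      simp [fourierJacobiCoeff, jacobiSeries, hL _ _ l hl]

lemma IsSiegelCuspForm.eq_zero_of_coeff_eq_zero (hF : IsSiegelCuspForm j k Sp4Z (fun _ => 1) F)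
    (ha : HasFourierExpansion F a) (hzero : a = 0) : F = 0 := by
  funext τ
  by_cases hτ : τ ∈ H2
  · subst hzero
    simpa using (ha τ hτ).unique (by simp)
  · exact hF.2.2.2 τ hτ

end FourierJacobi

/-! ### Taylor coefficients at torsion points -/

section ExponentialSeries

variable {ι : Type*} {b : ι → ℂ} {s : ι → ℝ}

lemma norm_expTwoPiI_ofReal (x : ℝ) : ‖𝐞 x‖ = 1 := by
  simp [norm_expTwoPiI]

lemma norm_expTwoPiI_ofReal_mul (x : ℝ) (z : ℂ) :
    ‖𝐞 (x * z)‖ = Real.exp (-(2 * Real.pi * (x * z.im))) := by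
  rw [norm_expTwoPiI, Complex.im_ofReal_mul]

lemma summable_norm_mul_exp_abs (hb : ∀ z : ℂ, Summable fun i => b i * 𝐞 (s i * z)) (V : ℝ) :
    Summable fun i => ‖b i‖ * Real.exp (V * |s i|) := by
  have hexp (W : ℝ) : Summable fun i => ‖b i‖ * Real.exp (W * s i) := by
    refine (hb ((-(W / (2 * Real.pi)) : ℝ) * I)).norm.congr fun i => ?_
    rw [norm_mul, norm_expTwoPiI_ofReal_mul, Complex.im_ofReal_mul, I_im]
    congr 2
    field_simp
  refine Summable.of_nonneg_of_le (fun i => by positivity) (fun i => ?_)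
    ((hexp V).add (hexp (-V)))
  rw [← mul_add]
  gcongr
  rcases abs_cases (s i) with ⟨h, -⟩ | ⟨h, -⟩
  · rw [h]
    exact le_add_of_nonneg_right (Real.exp_nonneg _)
  · rw [h, mul_neg, neg_mul]
    exact le_add_of_nonneg_left (Real.exp_nonneg _)

lemma summable_norm_mul_pow_mul_exp_abs (hb : ∀ z : ℂ, Summable fun i => b i * 𝐞 (s i * z))
    (l : ℕ) (V : ℝ) : Summable fun i => ‖b i‖ * (|s i| ^ l * Real.exp (V * |s i|)) := by
  refine Summable.of_nonneg_of_le (fun i => by positivity) (fun i => ?_)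
    ((summable_norm_mul_exp_abs hb (1 + V)).mul_left (l.factorial : ℝ))
  have hpow : |s i| ^ l ≤ l.factorial * Real.exp |s i| := by
    have h := Real.pow_div_factorial_le_exp |s i| (abs_nonneg _) l
    rwa [div_le_iff₀' (by positivity)] at h
  calc ‖b i‖ * (|s i| ^ l * Real.exp (V * |s i|))
      ≤ ‖b i‖ * (l.factorial * Real.exp |s i| * Real.exp (V * |s i|)) := by gcongr
    _ = l.factorial * (‖b i‖ * Real.exp ((1 + V) * |s i|)) := by
        rw [add_mul, one_mul, Real.exp_add]
        ring

lemma summable_mul_pow (hb : ∀ z : ℂ, Summable fun i => b i * 𝐞 (s i * z)) (l : ℕ) :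
    Summable fun i => b i * (s i : ℂ) ^ l := by
  refine Summable.of_norm ((summable_norm_mul_pow_mul_exp_abs hb l 0).congr fun i => ?_)
  simp

lemma norm_expTwoPiI_sub_taylor_le (s : ℝ) (l : ℕ) {z : ℂ} (hz : ‖z‖ ≤ 1) :
    ‖𝐞 (s * z) - ∑ i ∈ Finset.range l, (2 * Real.pi * I * (s * z)) ^ i / i.factorial‖ ≤
      (2 * Real.pi * ‖z‖) ^ l * (|s| ^ l * Real.exp (2 * Real.pi * |s|)) := by
  have hnorm : ‖2 * Real.pi * I * (s * z)‖ = 2 * Real.pi * |s| * ‖z‖ := by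
    simp [abs_of_pos Real.pi_pos, mul_assoc]
  refine (Complex.norm_exp_sub_sum_le_norm_mul_exp _ l).trans ?_
  rw [hnorm]
  calc (2 * Real.pi * |s| * ‖z‖) ^ l * Real.exp (2 * Real.pi * |s| * ‖z‖)
      ≤ (2 * Real.pi * |s| * ‖z‖) ^ l * Real.exp (2 * Real.pi * |s|) := by
        have : 2 * Real.pi * |s| * ‖z‖ ≤ 2 * Real.pi * |s| :=
          mul_le_of_le_one_right (by positivity) hz
        exact mul_le_mul_of_nonneg_left (Real.exp_le_exp.2 this) (by positivity)
    _ = (2 * Real.pi * ‖z‖) ^ l * (|s| ^ l * Real.exp (2 * Real.pi * |s|)) := by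
        rw [mul_right_comm, mul_pow _ |s|]
        ring

lemma exists_norm_tsum_expTwoPiI_sub_le (hb : ∀ z : ℂ, Summable fun i => b i * 𝐞 (s i * z))
    (l : ℕ) : ∃ C : ℝ, ∀ z : ℂ, ‖z‖ ≤ 1 →
      ‖∑' i, b i * 𝐞 (s i * z) - ∑ n ∈ Finset.range l,
        (2 * Real.pi * I * z) ^ n / n.factorial * ∑' i, b i * (s i : ℂ) ^ n‖ ≤ C * ‖z‖ ^ l := by
  have hC := (summable_norm_mul_pow_mul_exp_abs hb l (2 * Real.pi)).hasSum
  set C := ∑' i, ‖b i‖ * (|s i| ^ l * Real.exp (2 * Real.pi * |s i|))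
  refine ⟨(2 * Real.pi) ^ l * C, fun z hz => ?_⟩
  have htaylor : HasSum (fun i => ∑ n ∈ Finset.range l,
      (2 * Real.pi * I * z) ^ n / n.factorial * (b i * (s i : ℂ) ^ n))
      (∑ n ∈ Finset.range l,
        (2 * Real.pi * I * z) ^ n / n.factorial * ∑' i, b i * (s i : ℂ) ^ n) :=
    hasSum_sum fun n _ => (summable_mul_pow hb n).hasSum.mul_left _
  have hconst : (2 * Real.pi) ^ l * C * ‖z‖ ^ l = (2 * Real.pi * ‖z‖) ^ l * C := by ring
  rw [← ((hb z).hasSum.sub htaylor).tsum_eq, hconst]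
  refine tsum_of_norm_bounded (hC.mul_left _) fun i => ?_
  have hterm : b i * 𝐞 (s i * z) - ∑ n ∈ Finset.range l,
      (2 * Real.pi * I * z) ^ n / n.factorial * (b i * (s i : ℂ) ^ n) =
      b i * (𝐞 (s i * z) -
        ∑ n ∈ Finset.range l, (2 * Real.pi * I * (s i * z)) ^ n / n.factorial) := by
    rw [mul_sub, Finset.mul_sum]
    congr 1
    refine Finset.sum_congr rfl fun n _ => ?_
    rw [mul_left_comm _ (s i : ℂ), mul_pow (s i : ℂ)]
    ring
  have hnorm := mul_le_mul_of_nonneg_left (norm_expTwoPiI_sub_taylor_le (s i) l hz)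
    (norm_nonneg (b i))
  rw [hterm, norm_mul]
  exact hnorm.trans_eq (mul_left_comm _ _ _)

lemma tendsto_tsum_expTwoPiI_div_pow (hb : ∀ z : ℂ, Summable fun i => b i * 𝐞 (s i * z)) {l : ℕ}
    (hl : ∀ n < l, ∑' i, b i * (s i : ℂ) ^ n = 0) :
    Tendsto (fun z => (∑' i, b i * 𝐞 (s i * z)) / z ^ l) (𝓝[≠] 0)
      (𝓝 ((2 * Real.pi * I) ^ l / l.factorial * ∑' i, b i * (s i : ℂ) ^ l)) := by
  obtain ⟨C, hC⟩ := exists_norm_tsum_expTwoPiI_sub_le hb (l + 1)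
  rw [tendsto_iff_norm_sub_tendsto_zero]
  have hlim : Tendsto (fun z : ℂ => C * ‖z‖) (𝓝[≠] 0) (𝓝 0) := by
    have h : Continuous fun z : ℂ => C * ‖z‖ := by fun_prop
    simpa using (h.tendsto 0).mono_left nhdsWithin_le_nhds
  refine squeeze_zero' (Eventually.of_forall fun _ => norm_nonneg _) ?_ hlim
  filter_upwards [mem_nhdsWithin_of_mem_nhds (Metric.closedBall_mem_nhds 0 one_pos),
    self_mem_nhdsWithin] with z hz hz0
  have hz0 : z ≠ 0 := hz0
  have hbound := hC z (by simpa using hz)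
  rw [Finset.sum_range_succ,
    Finset.sum_eq_zero fun n hn => by rw [hl n (Finset.mem_range.1 hn), mul_zero], zero_add]
    at hbound
  have hquot : (∑' i, b i * 𝐞 (s i * z)) / z ^ l -
      (2 * Real.pi * I) ^ l / l.factorial * ∑' i, b i * (s i : ℂ) ^ l =
      (∑' i, b i * 𝐞 (s i * z) -
        (2 * Real.pi * I * z) ^ l / l.factorial * ∑' i, b i * (s i : ℂ) ^ l) / z ^ l := by
    rw [eq_div_iff (pow_ne_zero l hz0), sub_mul, div_mul_cancel₀ _ (pow_ne_zero l hz0)]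
    ring
  rw [hquot, norm_div, norm_pow, div_le_iff₀ (by positivity)]
  exact hbound.trans_eq (by ring)

end ExponentialSeries

section TorsionTaylor

variable {k : ℕ} {m : ℤ} {c : ℤ × ℤ → ℂ}

/-- The exponent of `𝐞 z` in the `(n, r)`-th term of a Jacobi form of index `m` after the
substitution `z ↦ z + xτ + y` and multiplication by `𝐞 (mx²τ + 2mxz)`. -/
def linExponent (m : ℤ) (x : ℝ) (p : ℤ × ℤ) : ℝ := p.2 + 2 * m * x

/-- The exponent of `𝐞 τ` in the situation of `linExponent`. -/
def quadExponent (m : ℤ) (x : ℝ) (p : ℤ × ℤ) : ℝ := p.1 + p.2 * x + m * x ^ 2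

/-- The `(n, r)`-th coefficient of the expansion in powers of `𝐞 z` of
`𝐞 (mx²τ + 2mxz) * jacobiSeries c τ (z + xτ + y)`. -/
def torsionCoeff (m : ℤ) (c : ℤ × ℤ → ℂ) (x y : ℝ) (τ : ℂ) (p : ℤ × ℤ) : ℂ :=
  c p * 𝐞 (p.2 * y) * 𝐞 (quadExponent m x p * τ)

/-- Up to the factor `(2πi)ˡ / l!`, the `l`-th Taylor coefficient at `z = 0` of
`𝐞 (mx²τ + 2mxz) * jacobiSeries c τ (z + xτ + y)`. -/
def torsionTaylor (m : ℤ) (c : ℤ × ℤ → ℂ) (x y : ℝ) (l : ℕ) (τ : ℂ) : ℂ :=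
  ∑' p, torsionCoeff m c x y τ p * (linExponent m x p : ℂ) ^ l

lemma torsionCoeff_mul_expTwoPiI (x y : ℝ) (τ z : ℂ) (p : ℤ × ℤ) :
    torsionCoeff m c x y τ p * 𝐞 (linExponent m x p * z) =
      𝐞 (m * x ^ 2 * τ + 2 * m * x * z) * (c p * 𝐞 (p.1 * τ + p.2 * (z + x * τ + y))) := by
  rw [torsionCoeff, mul_left_comm, mul_assoc, mul_assoc, ← expTwoPiI_add, ← expTwoPiI_add,
    ← expTwoPiI_add]
  congr 2
  simp only [quadExponent, linExponent]
  push_cast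
  ring

lemma tsum_torsionCoeff_mul_expTwoPiI (x y : ℝ) (τ z : ℂ) :
    ∑' p, torsionCoeff m c x y τ p * 𝐞 (linExponent m x p * z) =
      𝐞 (m * x ^ 2 * τ + 2 * m * x * z) * jacobiSeries c τ (z + x * τ + y) := by
  simp only [torsionCoeff_mul_expTwoPiI, tsum_mul_left, jacobiSeries]

lemma norm_torsionCoeff_mul_pow (x y : ℝ) (l : ℕ) (τ : ℂ) (p : ℤ × ℤ) :
    ‖torsionCoeff m c x y τ p * (linExponent m x p : ℂ) ^ l‖ =
      ‖c p‖ * |linExponent m x p| ^ l *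
        Real.exp (-(2 * Real.pi * (quadExponent m x p * τ.im))) := by
  have hunit : ‖𝐞 (p.2 * y)‖ = 1 := by
    simpa using norm_expTwoPiI_ofReal (p.2 * y)
  rw [torsionCoeff, norm_mul, norm_mul, norm_mul, hunit, norm_expTwoPiI_ofReal_mul, norm_pow,
    Complex.norm_real, Real.norm_eq_abs, mul_one, mul_right_comm]

namespace IsJacobiCusp

variable (hc : IsJacobiCusp k m c)
include hc

lemma quadExponent_pos (x : ℝ) {p : ℤ × ℤ} (h : c p ≠ 0) : 0 < quadExponent m x p := by
  obtain ⟨hn, hdisc⟩ := hc.pos h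
  have : (0 : ℝ) < p.1 := by exact_mod_cast hn
  have hdisc' : 0 < 4 * (p.1 : ℝ) * m - (p.2 : ℝ) ^ 2 := sub_pos.2 (by exact_mod_cast hdisc)
  have hsq : 4 * (p.1 : ℝ) * quadExponent m x p =
      (2 * p.1 + p.2 * x) ^ 2 + (4 * p.1 * m - (p.2 : ℝ) ^ 2) * x ^ 2 := by
    unfold quadExponent
    ring
  have hpos : 0 < 4 * (p.1 : ℝ) * quadExponent m x p := by
    rw [hsq]
    rcases eq_or_ne x 0 with rfl | hx
    · simp only [mul_zero, add_zero]
      positivity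
    · positivity
  exact pos_of_mul_pos_right hpos (by positivity)

lemma summable_torsionCoeff_mul_expTwoPiI (x y : ℝ) {τ : ℂ} (hτ : 0 < τ.im) (z : ℂ) :
    Summable fun p => torsionCoeff m c x y τ p * 𝐞 (linExponent m x p * z) := by
  simp only [torsionCoeff_mul_expTwoPiI]
  exact (hc.summable _ hτ).mul_left _

lemma summable_norm_mul_exp_quadExponent (x : ℝ) (l : ℕ) {y : ℝ} (hy : 0 < y) :
    Summable fun p => ‖c p‖ * |linExponent m x p| ^ l *
      Real.exp (-(2 * Real.pi * (quadExponent m x p * y))) := by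
  refine (summable_mul_pow (hc.summable_torsionCoeff_mul_expTwoPiI x 0 (τ := y * I)
    (by simpa using hy)) l).norm.congr fun p => ?_
  rw [norm_torsionCoeff_mul_pow, Complex.im_ofReal_mul, I_im, mul_one]

theorem differentiableOn_torsionTaylor (x y : ℝ) (l : ℕ) :
    DifferentiableOn ℂ (torsionTaylor m c x y l) UpperHalfPlane.upperHalfPlaneSet := by
  intro τ (hτ : 0 < τ.im)
  have hopen : IsOpen {σ : ℂ | τ.im / 2 < σ.im} := isOpen_lt continuous_const Complex.continuous_im
  have hdiff : DifferentiableOn ℂ (torsionTaylor m c x y l) {σ : ℂ | τ.im / 2 < σ.im} := by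
    refine differentiableOn_tsum_of_summable_norm
      (hc.summable_norm_mul_exp_quadExponent x l (half_pos hτ)) (fun p => ?_) hopen ?_
    · unfold torsionCoeff expTwoPiI
      fun_prop
    · intro p σ (hσ : τ.im / 2 < σ.im)
      rw [norm_torsionCoeff_mul_pow]
      rcases eq_or_ne (c p) 0 with h0 | h0
      · simp [h0]
      · have := hc.quadExponent_pos x h0
        gcongr
  have hmem : τ ∈ {σ : ℂ | τ.im / 2 < σ.im} := half_lt_self hτ
  exact ((hdiff τ hmem).differentiableAt (hopen.mem_nhds hmem)).differentiableWithinAt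

theorem torsionTaylor_isBigO (x y : ℝ) (l : ℕ) {β : ℝ}
    (hβ : ∀ p, c p ≠ 0 → β ≤ quadExponent m x p) :
    (fun z : UpperHalfPlane => torsionTaylor m c x y l z) =O[UpperHalfPlane.atImInfty]
      fun z => Real.exp (-(2 * Real.pi * β * z.im)) := by
  have hsum := (hc.summable_norm_mul_exp_quadExponent x l one_pos).hasSum
  set C := ∑' p, ‖c p‖ * |linExponent m x p| ^ l *
    Real.exp (-(2 * Real.pi * (quadExponent m x p * 1)))
  refine Asymptotics.IsBigO.of_bound (C * Real.exp (2 * Real.pi * β)) ?_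
  filter_upwards [tendsto_comap.eventually_ge_atTop 1] with z hz
  rw [Real.norm_of_nonneg (Real.exp_nonneg _), mul_assoc]
  refine tsum_of_norm_bounded (hsum.mul_right _) fun p => ?_
  rw [norm_torsionCoeff_mul_pow]
  rcases eq_or_ne (c p) 0 with h0 | h0
  · simp [h0]
  · have hexp : 0 ≤ 2 * Real.pi * ((quadExponent m x p - β) * (z.im - 1)) :=
      mul_nonneg (by positivity) (mul_nonneg (sub_nonneg.2 (hβ p h0)) (sub_nonneg.2 hz))
    rw [mul_assoc (‖c p‖ * _), ← Real.exp_add, ← Real.exp_add]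
    gcongr
    rw [UpperHalfPlane.coe_im]
    linarith

end IsJacobiCusp

lemma torsionTaylor_add_one (x y : ℝ) (l : ℕ) (τ : ℂ) :
    torsionTaylor m c x y l (τ + 1) = 𝐞 (m * x ^ 2) * torsionTaylor m c x (y + x) l τ := by
  rw [torsionTaylor, torsionTaylor, ← tsum_mul_left]
  refine tsum_congr fun p => ?_
  have hexp : 𝐞 (p.2 * y) * 𝐞 (quadExponent m x p * (τ + 1)) =
      𝐞 (m * x ^ 2) * 𝐞 (p.2 * ((y + x : ℝ) : ℂ)) * 𝐞 (quadExponent m x p * τ) := by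
    have hn : (p.2 * y + quadExponent m x p * (τ + 1) : ℂ) =
        m * x ^ 2 + p.2 * ((y + x : ℝ) : ℂ) + quadExponent m x p * τ + (p.1 : ℤ) := by
      simp only [quadExponent]
      push_cast
      ring
    rw [← expTwoPiI_add, hn, expTwoPiI_add, expTwoPiI_intCast, mul_one, expTwoPiI_add,
      expTwoPiI_add]
  rw [torsionCoeff, torsionCoeff]
  linear_combination (c p * linExponent m x p ^ l) * hexp

lemma norm_torsionTaylor_add_one (x y : ℝ) (l : ℕ) (τ : ℂ) :
    ‖torsionTaylor m c x y l (τ + 1)‖ = ‖torsionTaylor m c x (y + x) l τ‖ := by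
  rw [torsionTaylor_add_one, norm_mul]
  convert one_mul _
  rw [← norm_expTwoPiI_ofReal (m * x ^ 2)]
  push_cast
  rfl

lemma torsionTaylor_add_intCast_right (x y : ℝ) (t : ℤ) (l : ℕ) (τ : ℂ) :
    torsionTaylor m c x (y + t) l τ = torsionTaylor m c x y l τ := by
  refine tsum_congr fun p => ?_
  have hexp : 𝐞 (p.2 * ((y + t : ℝ) : ℂ)) = 𝐞 (p.2 * y) := by
    have hn : (p.2 : ℂ) * ((y + t : ℝ) : ℂ) = p.2 * y + ((p.2 * t : ℤ) : ℂ) := by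
      push_cast
      ring
    rw [hn, expTwoPiI_add, expTwoPiI_intCast, mul_one]
  rw [torsionCoeff, torsionCoeff, hexp]

/-- The substitution `z ↦ z + tτ` on the exponents of a Jacobi form of index `m`. -/
def jacobiShift (m t : ℤ) : ℤ × ℤ ≃ ℤ × ℤ where
  toFun p := (p.1 + p.2 * t + m * t ^ 2, p.2 + 2 * m * t)
  invFun p := (p.1 - p.2 * t + m * t ^ 2, p.2 - 2 * m * t)
  left_inv p := by ext <;> simp; ring
  right_inv p := by ext <;> simp; ring

lemma linExponent_jacobiShift (t : ℤ) (x : ℝ) (p : ℤ × ℤ) :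
    linExponent m x (jacobiShift m t p) = linExponent m (x + t) p := by
  simp only [linExponent, jacobiShift, Equiv.coe_fn_mk]
  push_cast
  ring

lemma quadExponent_jacobiShift (t : ℤ) (x : ℝ) (p : ℤ × ℤ) :
    quadExponent m x (jacobiShift m t p) = quadExponent m (x + t) p := by
  simp only [quadExponent, jacobiShift, Equiv.coe_fn_mk]
  push_cast
  ring

namespace IsJacobiCusp

variable (hc : IsJacobiCusp k m c)
include hc

lemma norm_torsionTaylor_add_intCast_left (x y : ℝ) (t : ℤ) (l : ℕ) (τ : ℂ) :
    ‖torsionTaylor m c (x + t) y l τ‖ = ‖torsionTaylor m c x y l τ‖ := by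
  have hunit : ‖𝐞 (2 * m * t * y)‖ = 1 := by
    exact_mod_cast norm_expTwoPiI_ofReal (2 * m * t * y)
  suffices h : torsionTaylor m c x y l τ = 𝐞 (2 * m * t * y) * torsionTaylor m c (x + t) y l τ by
    rw [h, norm_mul, hunit, one_mul]
  rw [torsionTaylor, torsionTaylor, ← tsum_mul_left, ← (jacobiShift m t).tsum_eq]
  refine tsum_congr fun p => ?_
  have hcp : c (jacobiShift m t p) = c p := hc.shift p.1 p.2 t
  have hexp : 𝐞 ((jacobiShift m t p).2 * y) = 𝐞 (2 * m * t * y) * 𝐞 (p.2 * y) := by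
    rw [← expTwoPiI_add]
    simp only [jacobiShift, Equiv.coe_fn_mk]
    push_cast
    ring_nf
  rw [torsionCoeff, torsionCoeff, hcp, hexp, linExponent_jacobiShift, quadExponent_jacobiShift]
  ring

lemma norm_torsionTaylor_add_intCast (x y : ℝ) (s t : ℤ) (l : ℕ) (τ : ℂ) :
    ‖torsionTaylor m c (x + s) (y + t) l τ‖ = ‖torsionTaylor m c x y l τ‖ := by
  rw [hc.norm_torsionTaylor_add_intCast_left, torsionTaylor_add_intCast_right]

lemma tsum_torsionCoeff_inv (x y : ℝ) {τ : ℂ} (z : ℂ) (hτ : 0 < τ.im) :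
    ∑' p, torsionCoeff m c x y (-1 / τ) p * 𝐞 (linExponent m x p * (z / τ)) =
      τ ^ k * 𝐞 (m * z ^ 2 / τ - 2 * m * x * y) *
        ∑' p, torsionCoeff m c y (-x) τ p * 𝐞 (linExponent m y p * z) := by
  have hτ0 : τ ≠ 0 := by
    rintro rfl
    exact lt_irrefl _ hτ
  have harg : z / τ + x * (-1 / τ) + y = (z + y * τ + ((-x : ℝ) : ℂ)) / τ := by
    push_cast
    field_simp
    ring
  have hexp : 𝐞 (m * x ^ 2 * (-1 / τ) + 2 * m * x * (z / τ)) *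
      𝐞 (m * (z + y * τ + ((-x : ℝ) : ℂ)) ^ 2 / τ) =
      𝐞 (m * z ^ 2 / τ - 2 * m * x * y) * 𝐞 (m * y ^ 2 * τ + 2 * m * y * z) := by
    rw [← expTwoPiI_add, ← expTwoPiI_add]
    congr 1
    push_cast
    field_simp
    ring
  rw [tsum_torsionCoeff_mul_expTwoPiI, tsum_torsionCoeff_mul_expTwoPiI, harg, hc.inv _ hτ]
  linear_combination (τ ^ k * jacobiSeries c τ (z + y * τ + ((-x : ℝ) : ℂ))) * hexp

/-- The first nonvanishing Taylor coefficient transforms like a modular form of weight `k + l`: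
compare the limits as `z → 0` of both sides of `tsum_torsionCoeff_inv`, divided by `zˡ`. -/
theorem norm_torsionTaylor_inv (x y : ℝ) {τ : ℂ} (hτ : 0 < τ.im) {l : ℕ}
    (hl : ∀ i < l, torsionTaylor m c x y i (-1 / τ) = 0)
    (hl' : ∀ i < l, torsionTaylor m c y (-x) i τ = 0) :
    ‖torsionTaylor m c x y l (-1 / τ)‖ = ‖τ‖ ^ (k + l) * ‖torsionTaylor m c y (-x) l τ‖ := by
  have hτ0 : τ ≠ 0 := by
    rintro rfl
    exact lt_irrefl _ hτ
  have hdiv : Tendsto (fun z : ℂ => z / τ) (𝓝[≠] 0) (𝓝[≠] 0) := by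
    refine tendsto_nhdsWithin_of_tendsto_nhds_of_eventually_within _ ?_ ?_
    · have h := (continuous_id.div_const τ).tendsto (0 : ℂ)
      rw [id, zero_div] at h
      exact h.mono_left nhdsWithin_le_nhds
    · filter_upwards [self_mem_nhdsWithin] with z hz
      exact div_ne_zero hz hτ0
  have hfactor : Tendsto (fun z : ℂ => τ ^ (k + l) * 𝐞 (m * z ^ 2 / τ - 2 * m * x * y)) (𝓝[≠] 0)
      (𝓝 (τ ^ (k + l) * 𝐞 (m * 0 ^ 2 / τ - 2 * m * x * y))) := by
    have h : Continuous fun z : ℂ => τ ^ (k + l) * 𝐞 (m * z ^ 2 / τ - 2 * m * x * y) := by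
      unfold expTwoPiI
      fun_prop
    exact (h.tendsto 0).mono_left nhdsWithin_le_nhds
  have hleft := (tendsto_tsum_expTwoPiI_div_pow (hc.summable_torsionCoeff_mul_expTwoPiI x y
    (neg_one_div_mem_upperHalfPlaneSet hτ)) hl).comp hdiv
  have hright := hfactor.mul
    (tendsto_tsum_expTwoPiI_div_pow (hc.summable_torsionCoeff_mul_expTwoPiI y (-x) hτ) hl')
  have hlimit := tendsto_nhds_unique (hleft.congr' ?_) hright
  · have hunit : ‖𝐞 (m * 0 ^ 2 / τ - 2 * m * x * y)‖ = 1 := by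
      rw [← norm_expTwoPiI_ofReal (-(2 * m * x * y))]
      congr 2
      push_cast
      ring
    have hne : ((2 * Real.pi * I) ^ l / l.factorial : ℂ) ≠ 0 :=
      div_ne_zero (pow_ne_zero _ two_pi_I_ne_zero) (by exact_mod_cast l.factorial_ne_zero)
    refine mul_left_cancel₀ (norm_ne_zero_iff.2 hne) ?_
    rw [mul_left_comm, ← mul_one (‖τ‖ ^ (k + l)), ← norm_pow, ← hunit]
    simpa only [norm_mul, torsionTaylor] using congrArg norm hlimit
  · filter_upwards [self_mem_nhdsWithin] with z (_ : z ≠ 0)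
    rw [Function.comp_apply, hc.tsum_torsionCoeff_inv x y z hτ, div_pow]
    field_simp
    ring

end IsJacobiCusp

end TorsionTaylor

section Torsion

variable {k : ℕ} {m : ℤ} {c : ℤ × ℤ → ℂ}

/-- The action of `τ ↦ τ + 1` on the torsion points `xτ + y`, in the coordinates `(x, y)`. -/
def torsionT (R : Type*) [AddCommGroup R] : R × R ≃+ R × R where
  toFun v := (v.1, v.2 + v.1)
  invFun v := (v.1, v.2 - v.1)
  left_inv v := by simp
  right_inv v := by simp
  map_add' v w := by
    ext
    · rfl
    · exact add_add_add_comm v.2 w.2 v.1 w.1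

/-- The action of `τ ↦ -1 / τ` on the torsion points `xτ + y`, in the coordinates `(x, y)`. -/
def torsionS (R : Type*) [AddCommGroup R] : R × R ≃+ R × R where
  toFun v := (v.2, -v.1)
  invFun v := (-v.2, v.1)
  left_inv v := by simp
  right_inv v := by simp
  map_add' v w := by
    ext
    · rfl
    · exact neg_add v.1 w.1

/-- The Taylor coefficient `torsionTaylor` at the `N`-torsion point `(v.1 / N) τ + v.2 / N`. -/
def torsionTaylorZMod (m : ℤ) (c : ℤ × ℤ → ℂ) {N : ℕ} (v : ZMod N × ZMod N) (l : ℕ) (τ : ℂ) : ℂ :=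
  torsionTaylor m c (v.1.val / N) (v.2.val / N) l τ

lemma exists_div_eq_val_div_add {N : ℕ} [NeZero N] {a : ZMod N} {u : ℤ} (h : (u : ZMod N) = a) :
    ∃ s : ℤ, (u / N : ℝ) = a.val / N + s := by
  have hN : (N : ℝ) ≠ 0 := NeZero.ne _
  have hdvd : (N : ℤ) ∣ u - a.val := by
    rw [← ZMod.intCast_eq_intCast_iff_dvd_sub]
    simp [h]
  obtain ⟨s, hs⟩ := hdvd
  refine ⟨s, ?_⟩
  have hs' : (u : ℝ) - a.val = N * s := by exact_mod_cast hs
  field_simp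
  linarith

namespace IsJacobiCusp

variable (hc : IsJacobiCusp k m c)
include hc

lemma norm_torsionTaylor_div {N : ℕ} [NeZero N] {v : ZMod N × ZMod N} {x y : ℤ}
    (hx : (x : ZMod N) = v.1) (hy : (y : ZMod N) = v.2) (l : ℕ) (τ : ℂ) :
    ‖torsionTaylor m c (x / N) (y / N) l τ‖ = ‖torsionTaylorZMod m c v l τ‖ := by
  obtain ⟨s, hs⟩ := exists_div_eq_val_div_add hx
  obtain ⟨t, ht⟩ := exists_div_eq_val_div_add hy
  rw [hs, ht, hc.norm_torsionTaylor_add_intCast, torsionTaylorZMod]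

lemma norm_torsionTaylorZMod_add_one {N : ℕ} [NeZero N] (v : ZMod N × ZMod N) (l : ℕ) (τ : ℂ) :
    ‖torsionTaylorZMod m c v l (τ + 1)‖ = ‖torsionTaylorZMod m c (torsionT _ v) l τ‖ := by
  rw [torsionTaylorZMod, norm_torsionTaylor_add_one, ← hc.norm_torsionTaylor_div
    (x := v.1.val) (y := v.2.val + v.1.val) (by simp [torsionT]) (by simp [torsionT])]
  push_cast
  rw [add_div]

lemma norm_torsionTaylor_torsionS {N : ℕ} [NeZero N] (v : ZMod N × ZMod N) (l : ℕ) (τ : ℂ) :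
    ‖torsionTaylor m c (v.2.val / N) (-(v.1.val / N)) l τ‖ =
      ‖torsionTaylorZMod m c (torsionS _ v) l τ‖ := by
  rw [← hc.norm_torsionTaylor_div (x := v.2.val) (y := -v.1.val) (by simp [torsionS])
    (by simp [torsionS])]
  push_cast
  rw [neg_div]

lemma norm_torsionTaylorZMod_inv {N : ℕ} [NeZero N] {v : ZMod N × ZMod N} {l : ℕ}
    (hv : ∀ i < l, Set.EqOn (torsionTaylorZMod m c v i) 0 UpperHalfPlane.upperHalfPlaneSet)
    (hSv : ∀ i < l, Set.EqOn (torsionTaylorZMod m c (torsionS _ v) i) 0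
      UpperHalfPlane.upperHalfPlaneSet) {τ : ℂ} (hτ : 0 < τ.im) :
    ‖torsionTaylorZMod m c v l (-1 / τ)‖ =
      ‖τ‖ ^ (k + l) * ‖torsionTaylorZMod m c (torsionS _ v) l τ‖ := by
  rw [← hc.norm_torsionTaylor_torsionS]
  refine hc.norm_torsionTaylor_inv _ _ hτ
    (fun i hi => hv i hi (neg_one_div_mem_upperHalfPlaneSet hτ)) fun i hi => ?_
  rw [← norm_eq_zero, hc.norm_torsionTaylor_torsionS, hSv i hi hτ, Pi.zero_apply, norm_zero]

lemma one_div_sq_le_quadExponent {N : ℕ} [NeZero N] (u : ℤ) {p : ℤ × ℤ} (h : c p ≠ 0) :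
    1 / (N : ℝ) ^ 2 ≤ quadExponent m (u / N) p := by
  have hN : (N : ℝ) ≠ 0 := NeZero.ne _
  have hquad : quadExponent m (u / N) p =
      ((p.1 * N ^ 2 + p.2 * u * N + m * u ^ 2 : ℤ) : ℝ) / N ^ 2 := by
    unfold quadExponent
    push_cast
    field_simp
  have hpos := hc.quadExponent_pos (u / N) h
  rw [hquad, div_pos_iff_of_pos_right (by positivity), Int.cast_pos] at hpos
  rw [hquad]
  gcongr
  exact_mod_cast hpos

lemma le_quadExponent_torsion {N : ℕ} [NeZero N] {n₀ : ℤ} (hn₀ : ∀ p, c p ≠ 0 → n₀ ≤ p.1)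
    (v : ZMod N) {p : ℤ × ℤ} (h : c p ≠ 0) :
    (if v = 0 then (n₀ : ℝ) else 1 / (N : ℝ) ^ 2) ≤ quadExponent m (v.val / N) p := by
  split_ifs with hv
  · simpa [quadExponent, hv] using hn₀ p h
  · simpa only [Int.cast_natCast] using hc.one_div_sq_le_quadExponent (N := N) v.val h

/-- The product of the `l`-th Taylor coefficients over an orbit of torsion points behaves like a
modular form of weight `(k + l) * card ι` as soon as all the lower ones vanish; the sum on the
right-hand side of `hl` bounds its order at the cusp from below. -/
theorem eqOn_torsionTaylorZMod_zero {N : ℕ} [NeZero N] {ι : Type*} [Fintype ι]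
    (v : ι → ZMod N × ZMod N) (t s : Equiv.Perm ι) (ht : ∀ i, v (t i) = torsionT _ (v i))
    (hs : ∀ i, v (s i) = torsionS _ (v i))
    (htrans : ∀ P : ι → Prop, (∀ i, P i → P (t i)) → (∀ i, P i → P (s i)) → ∀ i i', P i → P i')
    {n₀ : ℤ} (hn₀ : ∀ p, c p ≠ 0 → n₀ ≤ p.1) {l : ℕ}
    (hl : (Fintype.card ι * (k + l : ℕ) : ℝ) <
      12 * ∑ i, if (v i).1 = 0 then (n₀ : ℝ) else 1 / (N : ℝ) ^ 2) (i : ι) :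
    Set.EqOn (torsionTaylorZMod m c (v i) l) 0 UpperHalfPlane.upperHalfPlaneSet := by
  induction l using Nat.strong_induction_on generalizing i with
  | _ l ih =>
  have hlower (l' : ℕ) (hl' : l' < l) (i : ι) :
      Set.EqOn (torsionTaylorZMod m c (v i) l') 0 UpperHalfPlane.upperHalfPlaneSet := by
    refine ih l' hl' (lt_of_le_of_lt ?_ hl) i
    gcongr
  refine eqOn_zero_of_norm_permuted (fun i => torsionTaylorZMod m c (v i) l) t s
    (fun i => if (v i).1 = 0 then (n₀ : ℝ) else 1 / (N : ℝ) ^ 2)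
    (fun i => hc.differentiableOn_torsionTaylor _ _ l) (fun i τ _ => ?_) (fun i τ hτ => ?_)
    (fun i => hc.torsionTaylor_isBigO _ _ l fun p hp => hc.le_quadExponent_torsion hn₀ _ hp)
    hl htrans i
  · rw [ht, hc.norm_torsionTaylorZMod_add_one]
  · rw [hs]
    exact hc.norm_torsionTaylorZMod_inv (hlower · · i)
      (fun l' hl' => hs i ▸ hlower l' hl' (s i)) hτ

theorem hasSum_moment {y : ℝ} {l : ℕ}
    (h : Set.EqOn (torsionTaylor m c 0 y l) 0 UpperHalfPlane.upperHalfPlaneSet) (n : ℤ) :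
    HasSum (fun r : ℤ => c (n, r) * 𝐞 (r * y) * (r : ℂ) ^ l) 0 := by
  have hterm (τ : ℂ) (n r : ℤ) :
      torsionCoeff m c 0 y τ (n, r) * (linExponent m 0 (n, r) : ℂ) ^ l =
        c (n, r) * 𝐞 (r * y) * (r : ℂ) ^ l * 𝐞 (n * τ) := by
    simp [torsionCoeff, linExponent, quadExponent, mul_right_comm]
  have htorsion {τ : ℂ} (hτ : 0 < τ.im) :=
    summable_mul_pow (hc.summable_torsionCoeff_mul_expTwoPiI 0 y hτ) l
  have hfiber (n : ℤ) : Summable fun r : ℤ => c (n, r) * 𝐞 (r * y) * (r : ℂ) ^ l := by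
    have h' := (htorsion (τ := I) (by simp)).comp_injective (Prod.mk_right_injective n)
    simp only [Function.comp_def, hterm] at h'
    exact (summable_mul_right_iff (expTwoPiI_ne_zero _)).1 h'
  have hzero : (fun n : ℤ => ∑' r : ℤ, c (n, r) * 𝐞 (r * y) * (r : ℂ) ^ l) = 0 := by
    refine eq_zero_of_hasSum_expTwoPiI_zero (y := 1) fun x => ?_
    have hτ : 0 < ((x : ℂ) + (1 : ℝ) * I).im := by simp
    have hsum := (htorsion hτ).hasSum
    rw [← torsionTaylor, h hτ] at hsum
    refine hsum.prod_fiberwise fun n => ?_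
    simp only [hterm]
    exact (hfiber n).hasSum.mul_right _
  exact (hfiber n).hasSum_iff.2 (congrFun hzero n)

theorem hasSum_moment_zero {n₀ : ℤ} (hn₀ : ∀ p, c p ≠ 0 → n₀ ≤ p.1) {l : ℕ}
    (hl : (k + l : ℕ) < 12 * n₀) (n : ℤ) :
    HasSum (fun r : ℤ => c (n, r) * (r : ℂ) ^ l) 0 := by
  have hl' : ((k + l : ℕ) : ℝ) < 12 * n₀ := by exact_mod_cast hl
  have h := hc.eqOn_torsionTaylorZMod_zero (N := 1) (fun _ : Unit => 0) 1 1
    (fun _ => (map_zero _).symm) (fun _ => (map_zero _).symm) (fun _ _ _ _ _ h => h) hn₀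
    (by simpa using hl') ()
  have hone : 𝐞 0 = 1 := by simpa using expTwoPiI_intCast 0
  have hzero : Set.EqOn (torsionTaylor m c 0 0 l) 0 UpperHalfPlane.upperHalfPlaneSet :=
    fun τ hτ => by simpa [torsionTaylorZMod] using h hτ
  simpa [hone] using hc.hasSum_moment hzero n

end IsJacobiCusp

section PrimeTorsion

variable {p : ℕ} [Fact p.Prime]

lemma forall_ne_zero_of_torsion_invariant {P : ZMod p × ZMod p → Prop}
    (hT : ∀ v, P v → P (torsionT _ v)) (hS : ∀ v, P v → P (torsionS _ v))
    {v w : ZMod p × ZMod p} (hv : v ≠ 0) (hw : w ≠ 0) (h : P v) : P w := by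
  have hiter (n : ℕ) (a b : ZMod p) (h : P (a, b)) : P (a, b + n * a) := by
    induction n with
    | zero => simpa using h
    | succ n ih =>
      rw [Nat.cast_succ, add_one_mul, ← add_assoc]
      exact hT _ ih
  have hsnd {a : ZMod p} (ha : a ≠ 0) (b b' : ZMod p) (h : P (a, b)) : P (a, b') := by
    have h' := hiter ((b' - b) / a).val a b h
    rwa [ZMod.natCast_zmod_val, div_mul_cancel₀ _ ha, add_sub_cancel] at h'
  have hfst {a a' : ZMod p} (ha : a ≠ 0) (ha' : a' ≠ 0) (b b' : ZMod p) (h : P (a, b)) :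
      P (a', b') :=
    hsnd ha' (-a) b' (hS _ (hsnd ha b a' h))
  obtain ⟨a, b⟩ := v
  obtain ⟨a', b'⟩ := w
  have hstart {a'' : ZMod p} (ha'' : a'' ≠ 0) (b'' : ZMod p) : P (a'', b'') := by
    rcases eq_or_ne a 0 with rfl | ha
    · exact hfst (by simpa using hv) ha'' _ _ (hS _ h)
    · exact hfst ha ha'' _ _ h
  rcases eq_or_ne a' 0 with rfl | ha'
  · have hb' : b' ≠ 0 := by simpa using hw
    simpa [torsionS] using hS _ (hstart (neg_ne_zero.2 hb') 0)
  · exact hstart ha' b'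

lemma sum_ne_zero_ite_fst_eq_zero (x : ℝ) :
    ∑ v : {v : ZMod p × ZMod p // v ≠ 0}, (if v.1.1 = 0 then (1 : ℝ) else x) =
      (p - 1) * (1 + p * x) := by
  have hsum : ∑ v : ZMod p × ZMod p, (if v.1 = 0 then (1 : ℝ) else x) =
      p * (1 + (p - 1) * x) := by
    have hfst : ∑ a : ZMod p, (if a = 0 then (1 : ℝ) else x) = 1 + (p - 1) * x := by
      rw [Fintype.sum_eq_add_sum_compl 0, if_pos rfl, Finset.sum_congr rfl fun a ha =>
        if_neg (by simpa using ha), Finset.sum_const, Finset.card_compl, Finset.card_singleton,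
        ZMod.card, nsmul_eq_mul, Nat.cast_sub NeZero.one_le, Nat.cast_one]
    have hprod (f : ZMod p → ℝ) : ∑ v : ZMod p × ZMod p, f v.1 = p * ∑ a, f a := by
      simp [Fintype.sum_prod_type_right, ZMod.card]
    rw [← hfst]
    exact hprod fun a => if a = 0 then 1 else x
  have h := Fintype.sum_eq_add_sum_subtype_ne
    (fun v : ZMod p × ZMod p => if v.1 = 0 then (1 : ℝ) else x) 0
  simp only [Prod.fst_zero, if_true] at h
  linarith

/-- Here the orbit consists of all `p ^ 2 - 1` nonzero torsion points, `p - 1` of which have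
`x = 0`. -/
theorem IsJacobiCusp.hasSum_moment_prime (hc : IsJacobiCusp k m c) {l : ℕ}
    (hl : p * (k + l) < 12) {b : ZMod p} (hb : b ≠ 0) (n : ℤ) :
    HasSum (fun r : ℤ => c (n, r) * 𝐞 (r * ((b.val / p : ℝ) : ℂ)) * (r : ℂ) ^ l) 0 := by
  have hp : (1 : ℝ) < p := by exact_mod_cast (Fact.out : p.Prime).one_lt
  have hcard : Fintype.card {v : ZMod p × ZMod p // v ≠ 0} = (p : ℝ) ^ 2 - 1 := by
    rw [Fintype.card_subtype_compl, Fintype.card_subtype_eq, Fintype.card_prod, ZMod.card,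
      Nat.cast_sub (Nat.mul_pos (NeZero.pos p) (NeZero.pos p))]
    push_cast
    ring
  have hl' : (p * (k + l : ℕ) : ℝ) < 12 := by exact_mod_cast hl
  have hbound : (Fintype.card {v : ZMod p × ZMod p // v ≠ 0} * (k + l : ℕ) : ℝ) <
      12 * ∑ v : {v : ZMod p × ZMod p // v ≠ 0},
        if v.1.1 = 0 then ((1 : ℤ) : ℝ) else 1 / (p : ℝ) ^ 2 := by
    rw [hcard, Int.cast_one, sum_ne_zero_ite_fst_eq_zero]
    have : (12 * ((p - 1) * (1 + p * (1 / (p : ℝ) ^ 2))) : ℝ) = ((p : ℝ) ^ 2 - 1) * (12 / p) := by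
      field_simp
      ring
    rw [this]
    exact mul_lt_mul_of_pos_left ((lt_div_iff₀' (by linarith)).2 hl') (by nlinarith)
  refine hc.hasSum_moment (fun τ hτ => ?_) n
  have h := hc.eqOn_torsionTaylorZMod_zero (fun v : {v : ZMod p × ZMod p // v ≠ 0} => v.1)
    ((torsionT (ZMod p)).toEquiv.subtypeEquiv fun v => by simp)
    ((torsionS (ZMod p)).toEquiv.subtypeEquiv fun v => by simp) (fun _ => rfl) (fun _ => rfl)
    (fun P hT hS v w hv => forall_ne_zero_of_torsion_invariant (P := fun v => ∀ h : v ≠ 0, P ⟨v, h⟩)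
      (fun v h _ => hT _ (h (by rintro rfl; simp_all)))
      (fun v h _ => hS _ (h (by rintro rfl; simp_all))) v.2 w.2 (fun _ => hv) w.2)
    (fun q hq => (hc.pos hq).1) hbound ⟨(0, b), by simpa using hb⟩ hτ
  simpa [torsionTaylorZMod] using h

end PrimeTorsion

end Torsion

/-! ### Zeros of Laurent polynomials -/

section ZeroCount

open Polynomial

lemma sum_le_natDegree_of_pow_dvd {K ι : Type*} [Field K] {p : K[X]} (hp : p ≠ 0) {s : Finset ι}
    {z : ι → K} (hz : Set.InjOn z s) {μ : ι → ℕ} (h : ∀ i ∈ s, (X - C (z i)) ^ μ i ∣ p) :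
    ∑ i ∈ s, μ i ≤ p.natDegree := by
  have hdvd : ∏ i ∈ s, (X - C (z i)) ^ μ i ∣ p := by
    refine Finset.prod_dvd_of_coprime (fun i hi i' hi' hne => IsCoprime.pow ?_) h
    refine isCoprime_X_sub_C_of_isUnit_sub (isUnit_iff_ne_zero.2 (sub_ne_zero.2 ?_))
    exact fun heq => hne (hz hi hi' heq)
  have hdeg := natDegree_le_of_dvd hdvd hp
  rw [natDegree_prod_of_monic _ _ fun i _ => (monic_X_sub_C _).pow _] at hdeg
  simpa using hdeg

lemma sum_mul_eval_eq_zero {K : Type*} [CommRing K] {P : K[X]} {ζ R : K} {L : ℕ}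
    (h : ∀ l < L, P.sum (fun i b => b * ζ ^ i * (i - R) ^ l) = 0) {q : K[X]}
    (hq : q.natDegree < L) : P.sum (fun i b => b * ζ ^ i * q.eval (i - R)) = 0 := by
  simp only [Polynomial.sum, eval_eq_sum_range, Finset.mul_sum] at h ⊢
  rw [Finset.sum_comm]
  refine Finset.sum_eq_zero fun l hl => ?_
  have hmoment := h l (by rw [Finset.mem_range] at hl; omega)
  calc _ = q.coeff l * ∑ i ∈ P.support, P.coeff i * ζ ^ i * (i - R) ^ l := by
        rw [Finset.mul_sum]
        exact Finset.sum_congr rfl fun i _ => by ring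
    _ = 0 := by rw [hmoment, mul_zero]

/-- Up to the factor `d! ζᵈ`, the `d`-th Taylor coefficient of `P` at `ζ` is the sum of
`b ζⁱ (i)_d` over the monomials `b Xⁱ` of `P`, and the falling factorial `(i)_d` is a polynomial of
degree `d` in `i - R`. -/
theorem X_sub_C_pow_dvd_of_sum_eq_zero {K : Type*} [Field K] [CharZero K] {P : K[X]} {ζ R : K}
    (hζ : ζ ≠ 0) {L : ℕ} (h : ∀ l < L, P.sum (fun i b => b * ζ ^ i * (i - R) ^ l) = 0) :
    (X - C ζ) ^ L ∣ P := by
  rw [X_sub_C_pow_dvd_iff, ← taylor_apply, X_pow_dvd_iff]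
  intro d hd
  have hfactor : (d.factorial * ζ ^ d : K) ≠ 0 :=
    mul_ne_zero (Nat.cast_ne_zero.2 d.factorial_ne_zero) (pow_ne_zero _ hζ)
  refine (mul_eq_zero.1 ?_).resolve_left hfactor
  have hfalling := sum_mul_eval_eq_zero h (q := (descPochhammer K d).comp (X + C R))
    (by simpa [natDegree_comp, descPochhammer_natDegree] using hd)
  rw [taylor_coeff, hasseDeriv_apply, Polynomial.sum, eval_finsetSum, Finset.mul_sum, ← hfalling]
  refine Finset.sum_congr rfl fun i _ => ?_
  simp only [eval_monomial, eval_comp, eval_add, eval_X, eval_C, sub_add_cancel,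
    descPochhammer_eval_eq_descFactorial, Nat.descFactorial_eq_factorial_mul_choose]
  rcases le_or_gt d i with hdi | hdi
  · rw [← pow_mul_pow_sub ζ hdi]
    push_cast
    ring
  · simp [Nat.choose_eq_zero_of_lt hdi]

/-- The polynomial `X ^ R * ∑ r, c r * X ^ r` attached to a function `c` supported in
`[-R, R]`. -/
def shiftedPolynomial (R : ℕ) (c : ℤ → ℂ) : ℂ[X] :=
  ∑ i ∈ Finset.range (2 * R + 1), monomial i (c (i - R))

lemma natDegree_shiftedPolynomial_le (R : ℕ) (c : ℤ → ℂ) :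
    (shiftedPolynomial R c).natDegree ≤ 2 * R := by
  refine natDegree_sum_le_of_forall_le _ _ fun i hi => (natDegree_monomial_le _).trans ?_
  rw [Finset.mem_range] at hi
  omega

section

variable {c : ℤ → ℂ} {R : ℕ} (hR : ∀ r, c r ≠ 0 → |r| ≤ R)
include hR

lemma coeff_shiftedPolynomial (i : ℕ) : (shiftedPolynomial R c).coeff i = c (i - R) := by
  rw [shiftedPolynomial, finsetSum_coeff]
  simp only [coeff_monomial, Finset.sum_ite_eq', Finset.mem_range, ite_eq_left_iff]
  intro hi
  by_contra hne
  have := (abs_le.1 (hR _ (Ne.symm hne))).2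
  omega

lemma shiftedPolynomial_ne_zero (hc : c ≠ 0) : shiftedPolynomial R c ≠ 0 := by
  obtain ⟨r, hr⟩ := Function.ne_iff.1 hc
  have hle := abs_le.1 (hR r hr)
  intro hzero
  have hcoeff := coeff_shiftedPolynomial hR (r + R).toNat
  rw [hzero, coeff_zero, Int.toNat_of_nonneg (by omega), add_sub_cancel_right] at hcoeff
  exact hr hcoeff.symm

lemma sum_shiftedPolynomial_eq_zero {ζ : ℂ} (hζ : ζ ≠ 0) {l : ℕ}
    (h : HasSum (fun r : ℤ => c r * ζ ^ r * (r : ℂ) ^ l) 0) :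
    (shiftedPolynomial R c).sum (fun i b => b * ζ ^ i * (i - R) ^ l) = 0 := by
  have hinj : Function.Injective fun i : ℕ => (i - R : ℤ) := fun i i' h => by simpa using h
  have hsupp : ∀ r ∉ Set.range fun i : ℕ => (i - R : ℤ), c r * ζ ^ r * (r : ℂ) ^ l = 0 := by
    intro r hr
    have hzero : c r = 0 := by
      by_contra hne
      have := abs_le.1 (hR r hne)
      exact hr ⟨(r + R).toNat, by simp only; omega⟩
    simp [hzero]
  have hsum := (hinj.hasSum_iff hsupp).2 h
  have hterm (i : ℕ) : ζ ^ R * (c (i - R) * ζ ^ (i - R : ℤ) * ((i - R : ℤ) : ℂ) ^ l) =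
      (shiftedPolynomial R c).coeff i * ζ ^ i * (i - R) ^ l := by
    rw [coeff_shiftedPolynomial hR, zpow_sub₀ hζ, zpow_natCast, zpow_natCast]
    push_cast
    field_simp
  have hshift : HasSum
      (fun i : ℕ => (shiftedPolynomial R c).coeff i * ζ ^ i * ((i : ℂ) - R) ^ l) 0 := by
    simpa only [mul_zero] using (hsum.mul_left (ζ ^ R)).congr_fun fun i => (hterm i).symm
  refine HasSum.unique (hasSum_sum_of_ne_finset_zero fun i hi => ?_) hshift
  simp only [notMem_support_iff.1 hi, zero_mul]

/-- A nonzero Laurent polynomial with exponents in `[-R, R]` has at most `2R` zeros in `ℂˣ`,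
counted with multiplicity; the latter is read off from the moments. -/
theorem sum_le_two_mul_of_hasSum_zero (hc : c ≠ 0) {ι : Type*} {s : Finset ι} {ζ : ι → ℂ}
    (hinj : Set.InjOn ζ s) (hζ : ∀ i ∈ s, ζ i ≠ 0) {μ : ι → ℕ}
    (h : ∀ i ∈ s, ∀ l < μ i, HasSum (fun r : ℤ => c r * ζ i ^ r * (r : ℂ) ^ l) 0) :
    ∑ i ∈ s, μ i ≤ 2 * R :=
  (sum_le_natDegree_of_pow_dvd (shiftedPolynomial_ne_zero hR hc) hinj fun i hi =>
    X_sub_C_pow_dvd_of_sum_eq_zero (hζ i hi) fun l hl =>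
      sum_shiftedPolynomial_eq_zero hR (hζ i hi) (h i hi l hl)).trans
    (natDegree_shiftedPolynomial_le R c)

end

end ZeroCount

lemma expTwoPiI_int_mul (r : ℤ) (x : ℂ) : 𝐞 (r * x) = 𝐞 x ^ r := by
  rw [expTwoPiI, expTwoPiI, ← Complex.exp_int_mul]
  ring_nf

lemma injOn_expTwoPiI : Set.InjOn (fun x : ℝ => 𝐞 x) (Set.Ico 0 1) := by
  intro x hx y hy h
  obtain ⟨n, hn⟩ := Complex.exp_eq_exp_iff_exists_int.1 h
  have hxy : x = y + n := by
    have : (x : ℂ) = y + n := by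
      refine mul_left_cancel₀ two_pi_I_ne_zero (hn.trans ?_)
      ring
    exact_mod_cast this
  have hlt : (n : ℝ) < 1 := by linarith [hx.2, hy.1]
  have hgt : (-1 : ℝ) < n := by linarith [hx.1, hy.2]
  have hzero : n = 0 := by
    have hlt' : n < 1 := by exact_mod_cast hlt
    have hgt' : -1 < n := by exact_mod_cast hgt
    omega
  simpa [hzero] using hxy

/-- The number of zeros, counted with multiplicity, that `∑ r, c (n, r) * X ^ r` must have when the
Fourier expansion of a Jacobi cusp form of weight `k` starts with `qⁿ`: they come from the torsion
points of order `1`, `2` and `3` respectively. -/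
def torsionZeroCount (n k : ℕ) : ℕ := (12 * n - k) + (6 - k) + 2 * (4 - k)

lemma torsionZeroCount_anti {n k k' : ℕ} (h : k ≤ k') :
    torsionZeroCount n k' ≤ torsionZeroCount n k := by
  unfold torsionZeroCount
  omega

theorem IsJacobiCusp.torsionZeroCount_le {k : ℕ} {m : ℤ} {c : ℤ × ℤ → ℂ}
    (hc : IsJacobiCusp k m c) {n : ℕ} (hn : ∀ p, c p ≠ 0 → n ≤ p.1) {R : ℕ}
    (hR : ∀ r, c (n, r) ≠ 0 → |r| ≤ R) {r : ℤ} (hr : c (n, r) ≠ 0) :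
    torsionZeroCount n k ≤ 2 * R := by
  let y : Fin 4 → ℝ := ![0, 1 / 2, 1 / 3, 2 / 3]
  let μ : Fin 4 → ℕ := ![12 * n - k, 6 - k, 4 - k, 4 - k]
  have hy : Function.Injective fun i => 𝐞 (y i) := by
    intro i i' h
    have hmem (i : Fin 4) : y i ∈ Set.Ico (0 : ℝ) 1 := by
      fin_cases i <;> norm_num [y]
    have heq := injOn_expTwoPiI (hmem i) (hmem i') h
    revert heq
    fin_cases i <;> fin_cases i' <;> norm_num [y]
  have hμ : ∑ i, μ i = torsionZeroCount n k := by
    simp only [Fin.sum_univ_four, μ, torsionZeroCount, Matrix.cons_val]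
    omega
  rw [← hμ]
  refine sum_le_two_mul_of_hasSum_zero hR (Function.ne_iff.2 ⟨r, hr⟩) hy.injOn
    (fun i _ => expTwoPiI_ne_zero (y i)) fun i _ l hl => ?_
  simp only [← expTwoPiI_int_mul]
  fin_cases i
  · have hl' : ((k + l : ℕ) : ℤ) < 12 * n := by simp [μ] at hl; omega
    have hone : 𝐞 0 = 1 := by simpa using expTwoPiI_intCast 0
    simpa [y, hone] using hc.hasSum_moment_zero hn hl' n
  · simpa [y, ZMod.val_one] using
      hc.hasSum_moment_prime (p := 2) (l := l) (by simp [μ] at hl; omega) one_ne_zero n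
  · simpa [y, ZMod.val_one] using
      hc.hasSum_moment_prime (p := 3) (l := l) (by simp [μ] at hl; omega) one_ne_zero n
  · simpa [y, show (2 : ZMod 3).val = 2 from rfl] using
      hc.hasSum_moment_prime (p := 3) (b := 2) (l := l) (by simp [μ] at hl; omega) (by decide) n

/-! ### Vanishing of the top components -/

section Vanishing

variable {j k : ℕ} {F : (Fin 2 → Fin 2 → ℂ) → (Fin (j + 1) → ℂ)}
  {a : ℤ × ℤ × ℤ → Fin (j + 1) → ℂ}

/-- The last `μ` components of the `m`-th Fourier–Jacobi coefficient vanish. -/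
def TopVanish (a : ℤ × ℤ × ℤ → Fin (j + 1) → ℂ) (m : ℤ) (μ : ℕ) : Prop :=
  ∀ n r (l : Fin (j + 1)), j < l + μ → a (n, r, m) l = 0

/-- The `m`-th Fourier–Jacobi coefficient is `O(q ^ N)` at the cusp. -/
def VanishBelow (a : ℤ × ℤ × ℤ → Fin (j + 1) → ℂ) (m : ℤ) (N : ℕ) : Prop :=
  ∀ n < (N : ℤ), ∀ r, a (n, r, m) = 0

lemma topVanish_zero (a : ℤ × ℤ × ℤ → Fin (j + 1) → ℂ) (m : ℤ) : TopVanish a m 0 :=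
  fun _ _ l hl => absurd l.2 (by omega)

lemma TopVanish.of_forall_eq_zero {m : ℤ} (h : ∀ n r, a (n, r, m) = 0) (μ : ℕ) :
    TopVanish a m μ :=
  fun n r l _ => congrFun (h n r) l

lemma TopVanish.eq_zero {m : ℤ} {μ : ℕ} (h : TopVanish a m μ) (hμ : j < μ) (n r : ℤ) :
    a (n, r, m) = 0 :=
  funext fun l => h n r l (by omega)

namespace IsSiegelCuspForm

variable (hF : IsSiegelCuspForm j k Sp4Z (fun _ => 1) F) (ha : HasFourierExpansion F a)
include hF ha

lemma coeff_swap_eq_zero {n r m : ℤ} (h : a (m, r, n) = 0) : a (n, r, m) = 0 :=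
  hF.coeff_eq_zero_of_formComp ha (U := !![0, 1; 1, 0]) (V := !![0, 1; 1, 0])
    (by simp [Matrix.one_fin_two]) (by simpa [formComp] using h)

lemma coeff_neg_eq_zero {n r m : ℤ} (h : a (n, r, m) = 0) : a (n, -r, m) = 0 :=
  hF.coeff_eq_zero_of_formComp ha (U := !![1, 0; 0, -1]) (V := !![1, 0; 0, -1])
    (by simp [Matrix.one_fin_two]) (by simpa [formComp] using h)

lemma coeff_eq_zero_of_nonpos {m : ℤ} (hm : m ≤ 0) (n r : ℤ) : a (n, r, m) = 0 := by
  by_contra h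
  have := hF.pos_of_coeff_ne_zero ha h
  omega

lemma vanishBelow_one (m : ℤ) : VanishBelow a m 1 := by
  intro n hn r
  by_contra h
  have := (hF.posDef_of_coeff_ne_zero ha h).1
  omega

lemma vanishBelow_of_forall_lt {N : ℕ} (h : ∀ m : ℕ, m < N → ∀ n r, a (n, r, m) = 0) (m : ℤ) :
    VanishBelow a m N := by
  intro n hn r
  refine hF.coeff_swap_eq_zero ha ?_
  rcases le_or_gt n 0 with hn₀ | hn₀
  · exact hF.coeff_eq_zero_of_nonpos ha hn₀ m r
  · lift n to ℕ using hn₀.le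
    exact h n (by exact_mod_cast hn) m r

lemma vanishBelow_succ {m N : ℕ} (hV : VanishBelow a m N)
    (h : ∀ r : ℕ, r ≤ m → a (N, r, m) = 0) : VanishBelow a m (N + 1) := by
  have hnat (r : ℕ) : a (N, r, m) = 0 := by
    rcases le_or_gt r m with hr | hr
    · exact h r hr
    · rw [hF.coeff_shear ha N r m (-1), hV _ (by linarith), symAct_zero]
  intro n hn r
  rcases lt_or_eq_of_le (Int.lt_add_one_iff.1 (by simpa using hn)) with hn | rfl
  · exact hV n hn r
  · obtain ⟨r, rfl | rfl⟩ := Int.eq_nat_or_neg r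
    exacts [hnat r, hF.coeff_neg_eq_zero ha (hnat r)]

end IsSiegelCuspForm

lemma IsJacobiCusp.abs_le_of_coeff_ne_zero {m : ℤ} {c : ℤ × ℤ → ℂ} (hc : IsJacobiCusp k m c)
    {n : ℤ} (hn : ∀ p, c p ≠ 0 → n ≤ p.1) {r : ℤ} (hr : c (n, r) ≠ 0) : |r| ≤ m := by
  have hle (t : ℤ) : n ≤ n + r * t + m * t ^ 2 :=
    hn (n + r * t + m * t ^ 2, r + 2 * m * t) (by rwa [hc.shift])
  exact abs_le.2 ⟨by linarith [hle 1], by linarith [hle (-1)]⟩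

/-- If a Jacobi cusp form is nonzero, the Laurent polynomial at the first power of `q` has too many
zeros for its degree, unless it involves one of the excluded pairs `(n, r)`. -/
theorem IsJacobiCusp.eq_zero_of_forall_lt_torsionZeroCount {m : ℕ} {c : ℤ × ℤ → ℂ}
    (hc : IsJacobiCusp k m c)
    (h : ∀ n r : ℕ, r ≤ m → r ^ 2 < 4 * n * m →
      2 * r < torsionZeroCount n k ∨ c (n, r) = 0 ∧ c (n, -r) = 0) : c = 0 := by
  have hnat (n : ℕ) : ∀ r, c (n, r) = 0 := by
    induction n using Nat.strong_induction_on with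
    | _ n ih =>
    have hmin (p : ℤ × ℤ) (hp : c p ≠ 0) : (n : ℤ) ≤ p.1 := by
      by_contra! hlt
      have := (hc.pos hp).1
      have hzero := ih p.1.toNat (by omega) p.2
      rw [Int.toNat_of_nonneg (by omega)] at hzero
      exact hp hzero
    have hlt (r : ℤ) (hr : c (n, r) ≠ 0) : 2 * r.natAbs < torsionZeroCount n k := by
      have habs := hc.abs_le_of_coeff_ne_zero hmin hr
      rw [Int.abs_eq_natAbs] at habs
      have hdisc := (hc.pos hr).2
      refine (h n r.natAbs (by omega) (by zify; rwa [sq_abs])).resolve_right fun hzero => hr ?_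
      rcases Int.natAbs_eq r with h | h <;> rw [h]
      exacts [hzero.1, hzero.2]
    intro r
    by_contra hr
    have hlt_r := hlt r hr
    have hcount := hc.torsionZeroCount_le hmin (R := (torsionZeroCount n k - 1) / 2)
      (fun r hr => by have := hlt r hr; rw [Int.abs_eq_natAbs]; omega) hr
    omega
  funext ⟨n, r⟩
  by_contra hne
  lift n to ℕ using zero_le_one.trans (hc.pos hne).1
  exact hne (hnat n r)

namespace IsSiegelCuspForm

variable (hF : IsSiegelCuspForm j k Sp4Z (fun _ => 1) F) (ha : HasFourierExpansion F a)
include hF ha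

theorem topVanish_succ {m N i : ℕ} (hV : VanishBelow a m N) (hi : TopVanish a m i)
    (h : ∀ n r : ℕ, N ≤ n → r ≤ m → r ^ 2 < 4 * n * m →
      2 * r < torsionZeroCount n (k + i) ∨ a (n, r, m) = 0) : TopVanish a m (i + 1) := by
  intro n r l hl
  rcases lt_or_ge j (l + i) with hlt | hle
  · exact hi n r l hlt
  have hc := hF.isJacobiCusp_coeff ha (m := m) (L := l)
    fun n r l' (hl' : (l : ℕ) < l') => hi n r l' (by omega)
  rw [show k + (j - l) = k + i by omega] at hc
  refine congrFun (hc.eq_zero_of_forall_lt_torsionZeroCount fun n r hr hdisc => ?_) (n, r)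
  have hzero (h : a (n, r, m) = 0) : a (n, r, m) l = 0 ∧ a (n, -r, m) l = 0 :=
    ⟨congrFun h l, congrFun (hF.coeff_neg_eq_zero ha h) l⟩
  rcases lt_or_ge n N with hn | hn
  · exact .inr (hzero (hV n (by exact_mod_cast hn) r))
  · exact (h n r hn hr hdisc).imp_right hzero

theorem topVanish {m N μ : ℕ} (hV : VanishBelow a m N)
    (h : ∀ n r : ℕ, N ≤ n → r ≤ m → r ^ 2 < 4 * n * m →
      2 * r < torsionZeroCount n (k + (μ - 1)) ∨ a (n, r, m) = 0) : TopVanish a m μ := by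
  suffices ∀ i ≤ μ, TopVanish a m i from this μ le_rfl
  intro i
  induction i with
  | zero => exact fun _ => topVanish_zero a m
  | succ i ih =>
    refine fun hi => hF.topVanish_succ ha hV (ih (by omega)) fun n r hn hr hdisc => ?_
    exact (h n r hn hr hdisc).imp_left fun hlt => hlt.trans_le (torsionZeroCount_anti (by omega))

theorem topVanish_of_vanishBelow {m N : ℕ} (hV : VanishBelow a m N) :
    TopVanish a m (12 * N - k - 2 * m) := by
  rcases Nat.eq_zero_or_pos (12 * N - k - 2 * m) with hzero | hpos
  · rw [hzero]
    exact topVanish_zero a m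
  · refine hF.topVanish ha hV fun n r hn hr _ => .inl ?_
    unfold torsionZeroCount
    omega

end IsSiegelCuspForm

/-! ### Vanishing of the binary forms -/

section Divisibility

open Polynomial

lemma ofFn_symAct (M : Matrix (Fin 2) (Fin 2) ℂ) (v : Fin (j + 1) → ℂ) :
    ofFn (j + 1) (symAct j M v) = ∑ l : Fin (j + 1), C (v l) *
      ((C (M 0 0) + C (M 1 0) * X) ^ (j - (l : ℕ)) * (C (M 0 1) + C (M 1 1) * X) ^ (l : ℕ)) := by
  ext i
  simp only [finsetSum_coeff, coeff_C_mul]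
  rcases lt_or_ge i (j + 1) with hi | hi
  · rw [ofFn_coeff_eq_val_of_lt _ hi]
    exact Finset.sum_congr rfl fun l _ => mul_comm _ _
  · rw [ofFn_coeff_eq_zero_of_ge _ hi, eq_comm]
    have hpow (x y : ℂ) (e : ℕ) : ((C x + C y * X) ^ e).natDegree ≤ e := by
      rw [add_comm]
      simpa using natDegree_pow_le_of_le e (natDegree_linear_le (a := y) (b := x))
    refine Finset.sum_eq_zero fun l _ => ?_
    rw [coeff_eq_zero_of_natDegree_lt, mul_zero]
    have := natDegree_mul_le_of_le (hpow (M 0 0) (M 1 0) (j - l)) (hpow (M 0 1) (M 1 1) l)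
    omega

lemma IsSiegelCuspForm.X_sub_C_pow_dvd_ofFn_coeff
    (hF : IsSiegelCuspForm j k Sp4Z (fun _ => 1) F) (ha : HasFourierExpansion F a)
    {n r m x y : ℤ} (hx : x ≠ 0) (hxy : IsCoprime x y) {μ : ℕ}
    (h : TopVanish a (n * x ^ 2 + r * x * y + m * y ^ 2) μ) :
    (X - C (y / x : ℂ)) ^ μ ∣ ofFn (j + 1) (a (n, r, m)) := by
  obtain ⟨u, v, huv⟩ := hxy
  have hVU : !![y, -x; u, v] * !![v, x; -u, y] = (1 : Matrix (Fin 2) (Fin 2) ℤ) := by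
    ext i i'
    fin_cases i <;> fin_cases i' <;> simp <;> linarith
  rw [hF.coeff_formComp ha hVU, map_smul, ofFn_symAct]
  refine dvd_smul_of_dvd _ (Finset.dvd_sum fun l _ => ?_)
  rcases lt_or_ge j (l + μ) with hl | hl
  · have hindex : (formComp !![v, x; -u, y] (n, r, m)).2.2 = n * x ^ 2 + r * x * y + m * y ^ 2 := by
      simp [formComp, mul_assoc]
    rw [← hindex] at h
    rw [h _ _ l hl, C_0, zero_mul]
    exact dvd_zero _
  · have hlin : X - C (y / x : ℂ) ∣ C (y : ℂ) + C (-x : ℂ) * X := by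
      refine ⟨C (-x : ℂ), ?_⟩
      have hx' : (x : ℂ) ≠ 0 := by exact_mod_cast hx
      rw [sub_mul, ← C_mul, mul_neg, div_mul_cancel₀ _ hx', C_neg, C_neg]
      ring
    refine dvd_mul_of_dvd_right (dvd_mul_of_dvd_left ?_ _) _
    simpa using (pow_dvd_pow _ (show μ ≤ j - l by omega)).trans (pow_dvd_pow_of_dvd hlin _)

lemma TopVanish.natDegree_ofFn_add_le {m : ℤ} {μ : ℕ} (h : TopVanish a m μ) {n r : ℤ}
    (hne : ofFn (j + 1) (a (n, r, m)) ≠ 0) :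
    (ofFn (j + 1) (a (n, r, m))).natDegree + μ ≤ j := by
  by_contra! hlt
  have hdeg := ofFn_natDegree_lt (Nat.succ_pos j) (a (n, r, m))
  refine hne (leadingCoeff_eq_zero.1 ?_)
  rw [leadingCoeff, ofFn_coeff_eq_val_of_lt _ hdeg]
  exact h n r ⟨_, hdeg⟩ hlt

/-- The binary form `a (n, r, m)` of degree `j` would have more than `j` zeros in `ℙ¹`. -/
theorem IsSiegelCuspForm.coeff_eq_zero_of_lt_sum
    (hF : IsSiegelCuspForm j k Sp4Z (fun _ => 1) F) (ha : HasFourierExpansion F a)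
    {μ : ℕ → ℕ} (hμ : ∀ m : ℕ, TopVanish a m (μ m)) {S : Finset (ℤ × ℤ)}
    (hS : ∀ v ∈ S, 0 < v.1 ∧ IsCoprime v.1 v.2) {n r m : ℤ}
    (h : j < μ m.toNat + ∑ v ∈ S, μ (n * v.1 ^ 2 + r * v.1 * v.2 + m * v.2 ^ 2).toNat) :
    a (n, r, m) = 0 := by
  have htop (m : ℤ) : TopVanish a m (μ m.toNat) := by
    rcases le_or_gt m 0 with hm | hm
    · exact .of_forall_eq_zero (hF.coeff_eq_zero_of_nonpos ha hm) _
    · simpa [Int.toNat_of_nonneg hm.le] using hμ m.toNat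
  by_contra hne
  have hp : ofFn (j + 1) (a (n, r, m)) ≠ 0 :=
    fun hzero => hne (injective_ofFn _ (by simpa using hzero))
  have hinj : Set.InjOn (fun v : ℤ × ℤ => (v.2 / v.1 : ℂ)) S := by
    intro v hv w hw hvw
    have hcop {v : ℤ × ℤ} (hv : v ∈ S) := Int.isCoprime_iff_gcd_eq_one.1 (hS v hv).2.symm
    have heq := Rat.div_int_inj (hS v hv).1 (hS w hw).1 (hcop hv) (hcop hw)
      (Rat.cast_injective (α := ℂ) (by simpa using hvw))
    exact Prod.ext heq.2 heq.1
  have hsum := sum_le_natDegree_of_pow_dvd hp hinj fun v hv =>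
    hF.X_sub_C_pow_dvd_ofFn_coeff ha (hS v hv).1.ne' (hS v hv).2 (htop _)
  have hdeg := (htop m).natDegree_ofFn_add_le hp
  omega

end Divisibility

/-- The slopes at which zeros of the binary forms `a (n, r, m)` are counted. -/
def testVectors : Finset (ℤ × ℤ) :=
  {v ∈ Finset.Icc 1 4 ×ˢ Finset.Icc (-4) 4 | Int.gcd v.1 v.2 = 1}

/-- The number of zeros forced on `a (n, r, m)` when the last `μ i` components of every index `i`
vanish. -/
def zeroCount (μ : ℕ → ℕ) (n r m : ℤ) : ℕ :=
  μ m.toNat + ∑ v ∈ testVectors, μ (n * v.1 ^ 2 + r * v.1 * v.2 + m * v.2 ^ 2).toNat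

lemma IsSiegelCuspForm.coeff_eq_zero_of_lt_zeroCount
    (hF : IsSiegelCuspForm j k Sp4Z (fun _ => 1) F) (ha : HasFourierExpansion F a)
    {μ : ℕ → ℕ} (hμ : ∀ m : ℕ, TopVanish a m (μ m)) {n r m : ℤ} (h : j < zeroCount μ n r m) :
    a (n, r, m) = 0 := by
  refine hF.coeff_eq_zero_of_lt_sum ha hμ (S := testVectors) (fun v hv => ?_) h
  simp only [testVectors, Finset.mem_filter, Finset.mem_product, Finset.mem_Icc] at hv
  exact ⟨by omega, Int.isCoprime_iff_gcd_eq_one.2 hv.2⟩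

/-- The number of leading components of index `m` that vanish for every cusp form of weight
`(j, 2)`, as given by the valence bound alone. -/
def initialOrder (m : ℕ) : ℕ :=
  [0, 8, 6, 4, 4, 3, 3, 2, 2, 2, 2, 2, 2, 1, 1, 1, 1, 1, 1, 1].getD m 0

/-- The vanishing order available at index `i` once all indices below `m` vanish and the index `m`
component is `O(q ^ N)`. -/
def orderBound (m N i : ℕ) : ℕ :=
  if i = m then 12 * N - 2 - 2 * m else max (initialOrder i) (12 * m - 2 - 2 * i)

lemma TopVanish.max {m : ℤ} {μ ν : ℕ} (hμ : TopVanish a m μ) (hν : TopVanish a m ν) :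
    TopVanish a m (max μ ν) := by
  rcases max_choice μ ν with h | h <;> rwa [h]

namespace IsSiegelCuspForm

variable (hF : IsSiegelCuspForm j (2 : ℕ) Sp4Z (fun _ => 1) F) (ha : HasFourierExpansion F a)
include hF ha

lemma topVanish_initialOrder (m : ℕ) : TopVanish a m (initialOrder m) := by
  rcases lt_or_ge m 20 with hm | hm
  · refine hF.topVanish ha (hF.vanishBelow_one ha m) fun n r hn hr hdisc => .inl ?_
    have hsmall : ∀ m < 20, ∀ n < 5, 1 ≤ n → ∀ r ≤ m, r ^ 2 < 4 * n * m →
        2 * r < torsionZeroCount n (2 + (initialOrder m - 1)) := by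
      decide +kernel
    rcases lt_or_ge n 5 with hn₅ | hn₅
    · exact hsmall m hm n hn₅ hn r hr hdisc
    · have hle : ∀ m < 20, initialOrder m ≤ 8 := by
        decide
      have := hle m hm
      unfold torsionZeroCount
      omega
  · rw [show initialOrder m = 0 from List.getD_eq_default _ _ (by simpa using hm)]
    exact topVanish_zero a m

lemma topVanish_orderBound {m N : ℕ} (hlt : ∀ i < m, ∀ n r, a (n, r, (i : ℕ)) = 0)
    (hV : VanishBelow a m N) (i : ℕ) : TopVanish a i (orderBound m N i) := by
  unfold orderBound
  split_ifs with hi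
  · rw [hi]
    exact hF.topVanish_of_vanishBelow ha hV
  · exact (hF.topVanish_initialOrder ha i).max
      (hF.topVanish_of_vanishBelow ha (hF.vanishBelow_of_forall_lt ha hlt i))

lemma topVanish_one_of_coeff_eq_zero (h : a (1, 1, 1) = 0) : TopVanish a 1 10 := by
  refine hF.topVanish ha (m := 1) (hF.vanishBelow_one ha 1) fun n r hn hr _ => ?_
  rcases lt_or_ge n 5 with hn₅ | hn₅
  · have hsmall : ∀ n < 5, 1 ≤ n → ∀ r ≤ 1,
        2 * r < torsionZeroCount n (2 + (10 - 1)) ∨ n = 1 ∧ r = 1 := by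
      decide
    refine (hsmall n hn₅ hn r hr).imp_right ?_
    rintro ⟨rfl, rfl⟩
    exact_mod_cast h
  · left
    unfold torsionZeroCount
    omega

lemma vanishBelow_one_two (hj : j ≤ 52) : VanishBelow a 1 2 := by
  have hV := hF.vanishBelow_one ha 1
  have hμ := hF.topVanish_orderBound ha (m := 1) (N := 1)
    (fun i hi => hF.coeff_eq_zero_of_nonpos ha (by omega)) hV
  have h₁ : a (1, 1, 1) = 0 := hF.coeff_eq_zero_of_lt_zeroCount ha hμ <| hj.trans_lt <| by
    decide +kernel
  have hμ' (i : ℕ) : TopVanish a i (Function.update (orderBound 1 1) 1 10 i) := by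
    rcases eq_or_ne i 1 with rfl | hi
    · rw [Function.update_self]
      exact hF.topVanish_one_of_coeff_eq_zero ha h₁
    · rw [Function.update_of_ne hi]
      exact hμ i
  have h₀ : a (1, 0, 1) = 0 := hF.coeff_eq_zero_of_lt_zeroCount ha hμ' <| hj.trans_lt <| by
    decide +kernel
  refine hF.vanishBelow_succ ha (m := 1) (N := 1) hV fun r hr => ?_
  interval_cases r
  exacts [h₀, h₁]

lemma vanishBelow_six (hj : j ≤ 52) {m : ℕ} (hm : m ∈ Finset.Icc 1 5)
    (hlt : ∀ i < m, ∀ n r, a (n, r, (i : ℕ)) = 0) : VanishBelow a m 6 := by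
  have hzeros : ∀ m ∈ Finset.Icc 1 5, ∀ N ∈ Finset.Icc (max 2 m) 5, ∀ r ≤ m,
      52 < zeroCount (orderBound m N) N r m := by
    decide +kernel
  have hstart : VanishBelow a m (max 2 m) := by
    rcases le_or_gt 2 m with h | h
    · rw [max_eq_right h]
      exact hF.vanishBelow_of_forall_lt ha hlt m
    · obtain rfl : m = 1 := by grind
      exact hF.vanishBelow_one_two ha hj
  refine Nat.le_induction (P := fun N _ => N ≤ 6 → VanishBelow a m N) (fun _ => hstart)
    (fun N hN ih hN₆ => ?_) 6 (by grind) le_rfl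
  have hV := ih (by omega)
  exact hF.vanishBelow_succ ha hV fun r hr => hF.coeff_eq_zero_of_lt_zeroCount ha
    (hF.topVanish_orderBound ha hlt hV) <|
    hj.trans_lt (hzeros m hm N (Finset.mem_Icc.2 ⟨hN, by omega⟩) r hr)

theorem coeff_eq_zero_of_weight_two (hj : j ≤ 52) (m : ℕ) : ∀ n r, a (n, r, (m : ℤ)) = 0 := by
  induction m using Nat.strong_induction_on with
  | _ m ih =>
    rcases Nat.eq_zero_or_pos m with rfl | hm
    · exact hF.coeff_eq_zero_of_nonpos ha le_rfl
    rcases le_or_gt m 5 with hm₅ | hm₅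
    · have hV := hF.vanishBelow_six ha hj (Finset.mem_Icc.2 ⟨hm, hm₅⟩) ih
      exact (hF.topVanish_of_vanishBelow ha hV).eq_zero (by omega)
    · have hV := hF.vanishBelow_of_forall_lt ha ih m
      exact (hF.topVanish_of_vanishBelow ha hV).eq_zero (by omega)

end IsSiegelCuspForm

theorem IsSiegelCuspForm.eq_zero_of_weight_two (hF : IsSiegelCuspForm j 2 Sp4Z (fun _ => 1) F)
    (hj : j ≤ 52) : F = 0 := by
  replace hF : IsSiegelCuspForm j (2 : ℕ) Sp4Z (fun _ => 1) F := hF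
  obtain ⟨a, ha⟩ := hF.exists_hasFourierExpansion
  refine hF.eq_zero_of_coeff_eq_zero ha (funext fun ⟨n, r, m⟩ => ?_)
  rcases le_or_gt m 0 with hm | hm
  · exact hF.coeff_eq_zero_of_nonpos ha hm n r
  · lift m to ℕ using hm.le
    exact hF.coeff_eq_zero_of_weight_two ha hj m n r

end Vanishing

/-- For every integer `j` with `0 ≤ j ≤ 52`, the space `S_{j,2}(Γ₂)` of Siegel cusp forms of
degree 2 and weight `(j,2)` on the full Siegel modular group `Γ₂ = Sp(4,ℤ)` is zero. -/
theorem vanishing_Sj2_level_one (j : ℕ) (hj : j ≤ 52) :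
    SiegelCusp j 2 Sp4Z (fun _ => 1) = ⊥ := by
  rw [Submodule.eq_bot_iff]
  exact fun F hF => IsSiegelCuspForm.eq_zero_of_weight_two hF hj
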